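/- Under the standing assumptions, suppose O is transfer Krull and Cl(R) ≅ Pic(O). Let P ∈ Spec(R) divide the conductor f, let n = ord([P]) and p = P ∩ O. Then the set of valuations v_p(u) over all atoms u of O_p satisfies: v_p(A(O_p)) ⊆ {1,2} if n = 2, and v_p(A(O_p)) = {1} if n ≠ 2. In particular O·R^× = R. -/

import Mathlib

open scoped nonZeroDivisors

section MonoidDefs
variable {H B : Type*} [CommMonoid H] [CommMonoid B]

/-- The set of lengths of `a`: `{0}` for units, otherwise the set of `k` such that
`a` is a product of `k` atoms (irreducible elements). -/
def lengthsSet (a : H) : Set ℕ :=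
  {k | (IsUnit a ∧ k = 0) ∨
    (¬ IsUnit a ∧ ∃ l : Multiset H, Multiset.card l = k ∧ (∀ x ∈ l, Irreducible x) ∧ l.prod = a)}

/-- A transfer homomorphism: (T1) `B = θ(H)·B^×` and `θ⁻¹(B^×) = H^×`;
(T2) factorizations of `θ u` lift to factorizations of `u` up to associates. -/
def IsTransferHom (θ : H →* B) : Prop :=
  (∀ b : B, ∃ u : H, ∃ ε : Bˣ, b = θ u * ε) ∧
  (∀ u : H, IsUnit (θ u) → IsUnit u) ∧
  (∀ u : H, ∀ b c : B, θ u = b * c →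
    ∃ v w : H, u = v * w ∧ Associated (θ v) b ∧ Associated (θ w) c)

/-- A Krull monoid: a monoid admitting a divisor homomorphism into a
free abelian monoid. -/
def IsKrullMonoid (H : Type*) [CommMonoid H] : Prop :=
  ∃ (ι : Type) (d : H →* Multiplicative (ι →₀ ℕ)), ∀ a b : H, d a ∣ d b → a ∣ b

/-- Half-factorial: all factorizations of an element into atoms have the same length. -/
def IsHalfFactorial (A : Type*) [CommMonoid A] : Prop :=
  ∀ (a : A) (l m : Multiset A), (∀ x ∈ l, Irreducible x) → (∀ x ∈ m, Irreducible x) →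
    l.prod = a → m.prod = a → Multiset.card l = Multiset.card m

/-- An absolutely irreducible element: an atom all of whose powers factor uniquely
into atoms, up to associates. -/
def AbsolutelyIrreducible (a : H) : Prop :=
  Irreducible a ∧ ∀ n : ℕ, 0 < n → ∀ l m : Multiset H,
    (∀ x ∈ l, Irreducible x) → (∀ x ∈ m, Irreducible x) →
    l.prod = a ^ n → m.prod = a ^ n → Multiset.Rel Associated l m

end MonoidDefs

section RingDefs
variable {R : Type*} [CommRing R]

/-- The conductor of a subring `O ⊆ R`: the largest ideal of `R` contained in `O`. -/
def Subring.conductor (O : Subring R) : Ideal R where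
  carrier := {x | ∀ r : R, x * r ∈ O}
  add_mem' := by
    intro a b ha hb r
    have h : (a + b) * r = a * r + b * r := by ring
    rw [h]; exact O.add_mem (ha r) (hb r)
  zero_mem' := by intro r; simpa using O.zero_mem
  smul_mem' := by
    intro c x hx r
    have h : c • x * r = x * (c * r) := by simp [smul_eq_mul]; ring
    rw [h]; exact hx (c * r)

/-- `a` is a regular element modulo the ideal `f`. -/
def RegF (f : Ideal R) (a : R) : Prop := IsUnit (Ideal.Quotient.mk f a)

end RingDefs

section TK
variable {K : Type*} [CommRing K]

/-- `x` and `y` are associated within the submonoid `H` of `K`. -/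
def AssocIn (H : Submonoid K) (x y : K) : Prop :=
  ∃ ε ∈ H, (∃ ε' ∈ H, ε * ε' = 1) ∧ x = y * ε

end TK

variable {R₀ : Type*}

/-- `H` is a Krull overmonoid of `O^∙` inside the quotient field of `O` (which is the
quotient field of `R`), with `O^∙ ⊆ H ⊆ q(O^∙)`, such that the inclusion `O^∙ ↪ H`
is a transfer homomorphism; this witnesses that `O` is transfer Krull. -/
structure IsTKOvermonoid {R : Type*} [CommRing R] [IsDomain R] [IsDedekindDomain R]
    (O : Subring R) (H : Submonoid (FractionRing R)) : Prop where
  nonzero : ∀ x ∈ H, x ≠ 0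
  incl : ∀ a : R, a ∈ O → a ≠ 0 → algebraMap R (FractionRing R) a ∈ H
  inQuot : ∀ x ∈ H, ∃ a b : R, a ∈ O ∧ b ∈ O ∧ a ≠ 0 ∧ b ≠ 0 ∧
    x * algebraMap R (FractionRing R) b = algebraMap R (FractionRing R) a
  krull : IsKrullMonoid ↥H
  t1 : ∀ x ∈ H, ∃ a : R, a ∈ O ∧ a ≠ 0 ∧ ∃ ε ∈ H, (∃ ε' ∈ H, ε * ε' = 1) ∧
    x = algebraMap R (FractionRing R) a * ε
  t1' : ∀ a : R, a ∈ O → a ≠ 0 →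
    (∃ y ∈ H, algebraMap R (FractionRing R) a * y = 1) → ∃ b ∈ O, a * b = 1
  t2 : ∀ a : R, a ∈ O → a ≠ 0 → ∀ x ∈ H, ∀ y ∈ H,
    algebraMap R (FractionRing R) a = x * y →
    ∃ v w : R, v ∈ O ∧ w ∈ O ∧ a = v * w ∧
      AssocIn H (algebraMap R (FractionRing R) v) x ∧
      AssocIn H (algebraMap R (FractionRing R) w) y

open Classical in
/-- The `P`-adic valuation of `a`: the multiplicity of the prime ideal `P` in the
factorization of the ideal `aR`. -/
noncomputable def idealVal {R : Type*} [CommRing R] [IsDomain R] [IsDedekindDomain R]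
    (P : Ideal R) (a : R) : ℕ :=
  Multiset.count P (UniqueFactorizationMonoid.normalizedFactors (Ideal.span {a}))

/-- `a ∈ O` maps to an atom of the localization of `O` at the prime `P ∩ O`. -/
def IsLocalAtom {R : Type*} [CommRing R] (O : Subring R) (P : Ideal R)
    (hq : (Ideal.comap (Subring.subtype O) P).IsPrime) (a : ↥O) : Prop :=
  Irreducible (algebraMap ↥O
    (@Localization.AtPrime ↥O _ (Ideal.comap (Subring.subtype O) P) hq) a)

/-!
Association in the Krull overmonoid `H` restricts to a congruence on `R` along which factorizations
lift to `O`. As soon as the elements of `R` have powers in `O`, raising a relation to such a power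
and lifting it compares prime ideal factorizations in `R`.

Some power of every `x` is idempotent modulo the finite conductor quotient, and an idempotent lies
in `O` once distinct primes of `R` dividing the conductor have distinct contractions to `O`. If two
primes had the same contraction `p`, then a generator of a power of any prime over `p` would be
related to `1`, hence so would an element of `O` generating a power of `pR`, which is absurd.

Next, every `x` coprime to the conductor has an `R`-unit multiple in `O`. If `Cl(R)` has at most two
elements, this is the injectivity of the surjection `Pic(O) → Cl(R)`, which holds by counting.
Otherwise, let `Q₁Q₂Q₃` be a principal product of regular primes and choose regular primes `Sᵢ` such
that `QᵢSᵢ` has a generator `aᵢ` in `O`. In `R`, the product `a₁a₂a₃` also splits into a generator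
of `Q₁Q₂Q₃` and one of `S₁S₂S₃`, and lifting this splitting yields a generator of `Q₁Q₂Q₃` in `O`.

Finally, let `ρ` generate `P`, or `PQ` with `Q` a regular prime of the class inverse to that of `P`.
An element of `O` related to `ρ` and supported on these primes has valuation `1` at `P`, unless
`[P]` has order two, where `P²` and `Q²` may occur as well. Up to a unit of `O_p`, an element of `O`
has the form `ερᵐ` with `ε : Rˣ`, and lifting this power of `ρ` exhibits it as a product of elements
of this kind, so a local atom is one of them. Applied to an element of odd valuation at `P` that is
a unit at the other primes dividing the conductor, the same lifting produces one of valuation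
exactly `1`; the products of these realize every conductor part, and `O·R^× = R` follows.
-/

section IdealFactors

open UniqueFactorizationMonoid

variable {R : Type*} [CommRing R]

lemma span_singleton_ne_zero {a : R} (ha : a ≠ 0) : Ideal.span {a} ≠ (0 : Ideal R) := by
  simpa [Ideal.zero_eq_bot, Ideal.span_singleton_eq_bot] using ha

lemma ne_zero_of_span_singleton_eq {a : R} {A : Ideal R} (hA : A ≠ 0) (h : Ideal.span {a} = A) :
    a ≠ 0 := by
  rintro rfl
  exact hA (by rw [← h, Ideal.span_singleton_zero, Ideal.zero_eq_bot])

variable [IsDedekindDomain R]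

/-- The multiset of prime ideal factors of the principal ideal `aR`. -/
noncomputable def idealFactors (a : R) : Multiset (Ideal R) :=
  normalizedFactors (Ideal.span {a})

lemma idealVal_eq_count [DecidableEq (Ideal R)] (P : Ideal R) (a : R) :
    idealVal P a = (idealFactors a).count P := by
  unfold idealVal idealFactors
  congr

lemma prod_idealFactors {a : R} (ha : a ≠ 0) : (idealFactors a).prod = Ideal.span {a} :=
  associated_iff_eq.mp (prod_normalizedFactors (span_singleton_ne_zero ha))

lemma prime_of_mem_idealFactors {a : R} {Q : Ideal R} (hQ : Q ∈ idealFactors a) : Prime Q :=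
  prime_of_normalized_factor Q hQ

lemma mem_idealFactors_iff {a : R} (ha : a ≠ 0) {Q : Ideal R} :
    Q ∈ idealFactors a ↔ Prime Q ∧ a ∈ Q := by
  rw [idealFactors, mem_normalizedFactors_iff (span_singleton_ne_zero ha),
    Ideal.dvd_span_singleton]

lemma idealFactors_mul {a b : R} (ha : a ≠ 0) (hb : b ≠ 0) :
    idealFactors (a * b) = idealFactors a + idealFactors b := by
  rw [idealFactors, ← Ideal.span_singleton_mul_span_singleton,
    normalizedFactors_mul (span_singleton_ne_zero ha) (span_singleton_ne_zero hb)]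
  rfl

lemma idealFactors_pow (a : R) (n : ℕ) : idealFactors (a ^ n) = n • idealFactors a := by
  rw [idealFactors, ← Ideal.span_singleton_pow, normalizedFactors_pow]
  rfl

lemma idealFactors_of_isUnit {a : R} (ha : IsUnit a) : idealFactors a = 0 := by
  rw [idealFactors, Ideal.span_singleton_eq_top.mpr ha, ← Ideal.one_eq_top,
    normalizedFactors_one]

lemma idealFactors_eq_zero_iff {a : R} (ha : a ≠ 0) : idealFactors a = 0 ↔ IsUnit a := by
  refine ⟨fun h => ?_, idealFactors_of_isUnit⟩
  rw [← Ideal.span_singleton_eq_top, ← prod_idealFactors ha, h, Multiset.prod_zero,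
    Ideal.one_eq_top]

lemma idealFactors_multiset_prod {s : Multiset R} (hs : ∀ x ∈ s, x ≠ 0) :
    idealFactors s.prod = (s.map idealFactors).sum := by
  induction s using Multiset.induction_on with
  | empty => simp [idealFactors_of_isUnit]
  | cons x s ih =>
    rw [Multiset.forall_mem_cons] at hs
    rw [Multiset.prod_cons, idealFactors_mul hs.1 (Multiset.prod_ne_zero fun h => hs.2 0 h rfl),
      ih hs.2, Multiset.map_cons, Multiset.sum_cons]

lemma idealFactors_eq_of_span_eq {a : R} {m : Multiset (Ideal R)} (hm : ∀ Q ∈ m, Prime Q)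
    (h : Ideal.span {a} = m.prod) : idealFactors a = m := by
  rw [idealFactors, h, normalizedFactors_prod_of_prime hm]

lemma idealFactors_eq_of_associated {a b : R} (h : Associated a b) :
    idealFactors a = idealFactors b := by
  rw [idealFactors, Ideal.span_singleton_eq_span_singleton.mpr h]
  rfl

lemma associated_of_idealFactors_eq {a b : R} (ha : a ≠ 0) (hb : b ≠ 0)
    (h : idealFactors a = idealFactors b) : Associated a b := by
  rw [← Ideal.span_singleton_eq_span_singleton, ← prod_idealFactors ha, ← prod_idealFactors hb, h]

end IdealFactors

section IdealClass

variable {R : Type*} [CommRing R] [IsDedekindDomain R]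

open Classical in
/-- The class of an ideal in the class group, with junk value `1` at the zero ideal. -/
noncomputable def idealClass (A : Ideal R) : ClassGroup R :=
  if h : A ∈ (Ideal R)⁰ then ClassGroup.mk0 ⟨A, h⟩ else 1

lemma idealClass_eq_mk0 {A : Ideal R} (h : A ∈ (Ideal R)⁰) :
    idealClass A = ClassGroup.mk0 ⟨A, h⟩ :=
  dif_pos h

lemma idealClass_eq_one_iff {A : Ideal R} (hA : A ≠ 0) :
    idealClass A = 1 ↔ ∃ x, Ideal.span {x} = A := by
  rw [idealClass_eq_mk0 (mem_nonZeroDivisors_of_ne_zero hA), ClassGroup.mk0_eq_one_iff]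
  exact ⟨fun ⟨x, hx⟩ => ⟨x, hx.symm⟩, fun ⟨x, hx⟩ => ⟨x, hx.symm⟩⟩

lemma idealClass_one : idealClass (1 : Ideal R) = 1 :=
  (idealClass_eq_one_iff one_ne_zero).mpr ⟨1, by rw [Ideal.span_singleton_one, Ideal.one_eq_top]⟩

lemma idealClass_span_singleton {x : R} (hx : x ≠ 0) : idealClass (Ideal.span {x}) = 1 :=
  (idealClass_eq_one_iff (span_singleton_ne_zero hx)).mpr ⟨x, rfl⟩

lemma idealClass_mul {A B : Ideal R} (hA : A ≠ 0) (hB : B ≠ 0) :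
    idealClass (A * B) = idealClass A * idealClass B := by
  rw [idealClass_eq_mk0 (mem_nonZeroDivisors_of_ne_zero hA),
    idealClass_eq_mk0 (mem_nonZeroDivisors_of_ne_zero hB),
    idealClass_eq_mk0 (mem_nonZeroDivisors_of_ne_zero (mul_ne_zero hA hB)), ← map_mul]
  rfl

lemma idealClass_multiset_prod {m : Multiset (Ideal R)} (hm : ∀ Q ∈ m, Q ≠ 0) :
    idealClass m.prod = (m.map idealClass).prod := by
  induction m using Multiset.induction_on with
  | empty => simpa using idealClass_one
  | cons Q m ih =>
    rw [Multiset.forall_mem_cons] at hm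
    rw [Multiset.prod_cons, idealClass_mul hm.1 (Multiset.prod_ne_zero fun h => hm.2 0 h rfl),
      ih hm.2, Multiset.map_cons, Multiset.prod_cons]

lemma idealClass_pow {A : Ideal R} (hA : A ≠ 0) (n : ℕ) :
    idealClass (A ^ n) = idealClass A ^ n := by
  rw [← Multiset.prod_replicate,
    idealClass_multiset_prod fun Q hQ => Multiset.eq_of_mem_replicate hQ ▸ hA,
    Multiset.map_replicate, Multiset.prod_replicate]

lemma prod_map_idealClass_idealFactors {a : R} (ha : a ≠ 0) :
    ((idealFactors a).map idealClass).prod = 1 := by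
  rw [← idealClass_multiset_prod fun Q hQ => (prime_of_mem_idealFactors hQ).ne_zero,
    prod_idealFactors ha, idealClass_span_singleton ha]

lemma exists_idealFactors_eq {m : Multiset (Ideal R)} (hm : ∀ Q ∈ m, Prime Q)
    (h : (m.map idealClass).prod = 1) : ∃ x : R, x ≠ 0 ∧ idealFactors x = m := by
  have hm0 : ∀ Q ∈ m, Q ≠ 0 := fun Q hQ => (hm Q hQ).ne_zero
  have hprod : m.prod ≠ 0 := Multiset.prod_ne_zero fun h => hm0 0 h rfl
  rw [← idealClass_multiset_prod hm0, idealClass_eq_one_iff hprod] at h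
  obtain ⟨x, hx⟩ := h
  exact ⟨x, ne_zero_of_span_singleton_eq hprod hx, idealFactors_eq_of_span_eq hm hx⟩

lemma exists_span_eq_pow (htor : ∀ c : ClassGroup R, ∃ n : ℕ, 0 < n ∧ c ^ n = 1) {A : Ideal R}
    (hA : A ≠ 0) : ∃ n : ℕ, 0 < n ∧ ∃ x : R, Ideal.span {x} = A ^ n := by
  obtain ⟨n, hn, h⟩ := htor (idealClass A)
  rw [← idealClass_pow hA, idealClass_eq_one_iff (pow_ne_zero n hA)] at h
  exact ⟨n, hn, h⟩

end IdealClass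

section Dvd

open UniqueFactorizationMonoid

variable {R : Type*} [CommRing R] [IsDedekindDomain R]

lemma idealFactors_le_iff_dvd {a b : R} (ha : a ≠ 0) (hb : b ≠ 0) :
    idealFactors a ≤ idealFactors b ↔ a ∣ b := by
  rw [← Ideal.span_singleton_le_span_singleton, ← Ideal.dvd_iff_le,
    dvd_iff_normalizedFactors_le_normalizedFactors (span_singleton_ne_zero ha)
      (span_singleton_ne_zero hb)]
  rfl

lemma two_le_card_idealFactors {w : R} (hw : w ≠ 0) (hu : ¬ IsUnit w)
    (h : ∀ Q ∈ idealFactors w, idealClass Q ≠ 1) : 2 ≤ (idealFactors w).card := by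
  refine (Nat.two_le_iff _).mpr ⟨?_, fun h1 => ?_⟩
  · rwa [Ne, Multiset.card_eq_zero, idealFactors_eq_zero_iff hw]
  · obtain ⟨Q, hQ⟩ := Multiset.card_eq_one.mp h1
    have hprod := prod_map_idealClass_idealFactors hw
    rw [hQ, Multiset.map_singleton, Multiset.prod_singleton] at hprod
    exact h Q (hQ ▸ Multiset.mem_singleton_self Q) hprod

end Dvd

section TransferCon

variable {R : Type*} [CommRing R]

/-- Every element of `R` has a power in `O`, with a uniform exponent. -/
def IsUniformRootExtension (O : Subring R) : Prop :=
  ∃ t : ℕ, 0 < t ∧ ∀ x : R, x ^ t ∈ O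

/-- The properties of the relation "`x` and `y` are associated in `H`" on `R` that witness that
the inclusion of `O^•` into a monoid `H` containing `R^•` is a transfer homomorphism. -/
structure IsTransferCon (O : Subring R) (c : Con R) : Prop where
  rel_of_associated : ∀ {x y : R}, Associated x y → c x y
  rel_of_rel_mul_right : ∀ {x y z : R}, z ≠ 0 → c (x * z) (y * z) → c x y
  exists_eq_mul : ∀ {a x y : R}, a ∈ O → a ≠ 0 → x ≠ 0 → y ≠ 0 → c a (x * y) →
    ∃ v ∈ O, ∃ w ∈ O, a = v * w ∧ c v x ∧ c w y
  isUnit_of_mem_of_rel_one : ∀ {a : R}, a ∈ O → a ≠ 0 → c a 1 → IsUnit a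

namespace IsTransferCon

lemma exists_lift [IsDomain R] {O : Subring R} {c : Con R} (hc : IsTransferCon O c) {a : R}
    (ha : a ∈ O) (ha0 : a ≠ 0) {s : Multiset R} (hs : ∀ y ∈ s, y ≠ 0) (h : c a s.prod) :
    ∃ m : Multiset R, (∃ u ∈ O, IsUnit u ∧ m.prod * u = a) ∧ (∀ w ∈ m, w ∈ O) ∧
      Multiset.Rel c m s := by
  induction s using Multiset.induction_on generalizing a with
  | empty =>
    exact ⟨0, ⟨a, ha, hc.isUnit_of_mem_of_rel_one ha ha0 h, one_mul a⟩,
      fun w hw => absurd hw (Multiset.notMem_zero w), Multiset.Rel.zero⟩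
  | cons y s ih =>
    rw [Multiset.forall_mem_cons] at hs
    rw [Multiset.prod_cons] at h
    obtain ⟨v, hv, w, hw, rfl, hvy, hws⟩ := hc.exists_eq_mul ha ha0 hs.1
      (Multiset.prod_ne_zero fun h0 => hs.2 0 h0 rfl) h
    obtain ⟨m, ⟨u, huO, hu, rfl⟩, hmO, hms⟩ := ih hw (right_ne_zero_of_mul ha0) hs.2 hws
    exact ⟨v ::ₘ m, ⟨u, huO, hu, by rw [Multiset.prod_cons, mul_assoc]⟩,
      Multiset.forall_mem_cons.mpr ⟨hv, hmO⟩, Multiset.Rel.cons hvy hms⟩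

variable [IsDedekindDomain R] {O : Subring R} {c : Con R}

lemma isUnit_of_rel_one (hc : IsTransferCon O c) (hO : IsUniformRootExtension O) {x : R}
    (hx : x ≠ 0) (h : c x 1) : IsUnit x := by
  obtain ⟨t, ht, hpow⟩ := hO
  have hxt : c (x ^ t) 1 := by simpa only [one_pow] using c.pow t h
  exact (isUnit_pow_iff ht.ne').mp
    (hc.isUnit_of_mem_of_rel_one (hpow x) (pow_ne_zero t hx) hxt)

lemma not_isUnit_of_rel (hc : IsTransferCon O c) (hO : IsUniformRootExtension O) {x y : R}
    (hy : y ≠ 0) (hyu : ¬ IsUnit y) (h : c x y) : ¬ IsUnit x := fun hx =>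
  hyu (hc.isUnit_of_rel_one hO hy
    (c.trans (c.symm h) (hc.rel_of_associated (associated_one_iff_isUnit.mpr hx))))

lemma associated_of_rel_of_dvd (hc : IsTransferCon O c) (hO : IsUniformRootExtension O) {w ρ : R}
    (hw : w ≠ 0) (h : c w ρ) (hdvd : ρ ∣ w) : Associated w ρ := by
  obtain ⟨s, rfl⟩ := hdvd
  have hs : c s 1 :=
    hc.rel_of_rel_mul_right (left_ne_zero_of_mul hw) (by rwa [one_mul, mul_comm])
  exact associated_mul_unit_left ρ s (hc.isUnit_of_rel_one hO (right_ne_zero_of_mul hw) hs)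

lemma idealFactors_eq_of_rel_of_le (hc : IsTransferCon O c) (hO : IsUniformRootExtension O)
    {w ρ : R} (hw : w ≠ 0) (hρ : ρ ≠ 0) (h : c w ρ) (hle : idealFactors ρ ≤ idealFactors w) :
    idealFactors w = idealFactors ρ :=
  idealFactors_eq_of_associated
    (hc.associated_of_rel_of_dvd hO hw h ((idealFactors_le_iff_dvd hρ hw).mp hle))

lemma exists_pow_lift (hc : IsTransferCon O c) (hO : IsUniformRootExtension O) {x : R}
    (hx : x ≠ 0) {s : Multiset R} (hs : ∀ y ∈ s, y ≠ 0 ∧ ¬ IsUnit y) (h : c x s.prod) :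
    ∃ t : ℕ, 0 < t ∧ ∃ m : Multiset R, m.card = t * s.card ∧
      (∀ w ∈ m, w ∈ O ∧ w ≠ 0 ∧ ¬ IsUnit w ∧ idealFactors w ⊆ idealFactors x ∧ ∃ y ∈ s, c w y) ∧
      (m.map idealFactors).sum = t • idealFactors x := by
  obtain ⟨t, ht, hpow⟩ := hO
  obtain ⟨m, ⟨u, -, hu, hmu⟩, hmO, hms⟩ := hc.exists_lift (s := t • s) (hpow x) (pow_ne_zero t hx)
    (fun y hy => (hs y (Multiset.mem_of_mem_nsmul hy)).1)
    (by rw [Multiset.prod_nsmul]; exact c.pow t h)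
  have hmx : Associated m.prod (x ^ t) := ⟨hu.unit, hmu⟩
  have hprod : m.prod ≠ 0 := (hmx.ne_zero_iff).mpr (pow_ne_zero t hx)
  have hm0 : ∀ w ∈ m, w ≠ 0 := fun w hw h0 => hprod (Multiset.prod_eq_zero (h0 ▸ hw))
  have hsum : (m.map idealFactors).sum = t • idealFactors x := by
    rw [← idealFactors_multiset_prod hm0, idealFactors_eq_of_associated hmx, idealFactors_pow]
  have hsub : ∀ w ∈ m, idealFactors w ⊆ idealFactors x := fun w hw Q hQ => by
    refine Multiset.mem_of_mem_nsmul (n := t) ?_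
    rw [← hsum]
    exact Multiset.mem_of_le (Multiset.le_sum_of_mem (Multiset.mem_map_of_mem _ hw)) hQ
  refine ⟨t, ht, m, by rw [Multiset.card_eq_card_of_rel hms, Multiset.card_nsmul], fun w hw => ?_,
    hsum⟩
  obtain ⟨y, hy, hwy⟩ := Multiset.exists_mem_of_rel_of_mem hms hw
  have hys := Multiset.mem_of_mem_nsmul hy
  exact ⟨hmO w hw, hm0 w hw, hc.not_isUnit_of_rel ⟨t, ht, hpow⟩ (hs y hys).1 (hs y hys).2 hwy,
    hsub w hw, y, hys, hwy⟩

lemma two_mul_card_le_card_idealFactors (hc : IsTransferCon O c)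
    (hO : IsUniformRootExtension O) {x : R} (hx : x ≠ 0)
    (hcl : ∀ Q ∈ idealFactors x, idealClass Q ≠ 1) {s : Multiset R}
    (hs : ∀ y ∈ s, y ≠ 0 ∧ ¬ IsUnit y) (h : c x s.prod) :
    2 * s.card ≤ (idealFactors x).card := by
  obtain ⟨t, ht, m, hcard, hm, hsum⟩ := hc.exists_pow_lift hO hx hs h
  have htwo : ∀ w ∈ m, 2 ≤ (idealFactors w).card := fun w hw =>
    two_le_card_idealFactors (hm w hw).2.1 (hm w hw).2.2.1 fun Q hQ =>
      hcl Q ((hm w hw).2.2.2.1 hQ)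
  have hle : m.card * 2 ≤ t * (idealFactors x).card := by
    have := Multiset.card_nsmul_le_sum (s := m.map (fun w => (idealFactors w).card)) (a := 2)
      (by simpa using htwo)
    rw [Multiset.card_map, smul_eq_mul] at this
    calc m.card * 2 ≤ (m.map fun w => (idealFactors w).card).sum := this
      _ = ((m.map idealFactors).sum).card := by
        rw [← Multiset.cardHom_apply, map_multiset_sum, Multiset.map_map]; rfl
      _ = t * (idealFactors x).card := by rw [hsum, Multiset.card_nsmul]
  rw [hcard] at hle
  exact Nat.le_of_mul_le_mul_left (by linarith) ht

lemma eq_two_of_rel_of_idealFactors_eq_replicate (hc : IsTransferCon O c)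
    (hO : IsUniformRootExtension O) {P Q : Ideal R} {ρ w : R} (hρ : ρ ≠ 0)
    (hρf : idealFactors ρ = {P, Q}) (hQ : idealClass Q ≠ 1) (hw : w ≠ 0) (h : c w ρ) {j : ℕ}
    (hwf : idealFactors w = Multiset.replicate j Q) : j = 2 ∧ idealClass Q ^ 2 = 1 := by
  have hPp : Prime P := prime_of_mem_idealFactors (a := ρ) (by simp [hρf])
  have hρu : ¬ IsUnit ρ := fun hu => by simp [idealFactors_of_isUnit hu] at hρf
  have hPQ : idealClass P * idealClass Q = 1 := by
    simpa [hρf] using prod_map_idealClass_idealFactors hρ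
  have hQj : idealClass Q ^ j = 1 := by
    simpa [hwf] using prod_map_idealClass_idealFactors hw
  have hPj : idealClass P ^ j = 1 := by
    simpa [mul_pow, hQj] using congrArg (· ^ j) hPQ
  have hP : idealClass P ≠ 1 := fun hP => hQ (by rwa [hP, one_mul] at hPQ)
  obtain ⟨σ, hσ, hσf⟩ : ∃ σ : R, σ ≠ 0 ∧ idealFactors σ = Multiset.replicate j P :=
    exists_idealFactors_eq (fun X hX => Multiset.eq_of_mem_replicate hX ▸ hPp) (by simpa)
  obtain ⟨k, rfl⟩ : ∃ k, j = k + 1 := Nat.exists_eq_succ_of_ne_zero fun hj =>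
    hc.not_isUnit_of_rel hO hρ hρu h ((idealFactors_eq_zero_iff hw).mp (by simp [hwf, hj]))
  have hassoc : Associated (w * σ) (ρ ^ (k + 1)) := by
    refine associated_of_idealFactors_eq (mul_ne_zero hw hσ) (pow_ne_zero _ hρ) ?_
    rw [idealFactors_mul hw hσ, idealFactors_pow, hwf, hσf, hρf, Multiset.insert_eq_cons,
      ← Multiset.singleton_add, nsmul_add, Multiset.nsmul_singleton, Multiset.nsmul_singleton,
      add_comm]
  have hσρ : c σ (ρ ^ k) := by
    refine hc.rel_of_rel_mul_right hρ ?_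
    rw [← pow_succ]
    refine c.trans ?_ (hc.rel_of_associated hassoc)
    rw [mul_comm]
    exact c.mul (c.symm h) (c.refl σ)
  have hdeg := hc.two_mul_card_le_card_idealFactors hO hσ (s := Multiset.replicate k ρ)
    (fun X hX => by rw [hσf] at hX; rwa [Multiset.eq_of_mem_replicate hX])
    (fun y hy => by rw [Multiset.eq_of_mem_replicate hy]; exact ⟨hρ, hρu⟩)
    (by rwa [Multiset.prod_replicate])
  rw [hσf, Multiset.card_replicate, Multiset.card_replicate] at hdeg
  have hk : k ≠ 0 := fun hk => hQ (by simpa [hk] using hQj)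
  obtain rfl : k = 1 := by omega
  exact ⟨rfl, hQj⟩

lemma idealFactors_eq_of_rel_of_mem_pair (hc : IsTransferCon O c) (hO : IsUniformRootExtension O)
    {P Q : Ideal R} (hne : P ≠ Q) {ρ w : R} (hρ : ρ ≠ 0) (hρf : idealFactors ρ = {P, Q})
    (hP : idealClass P ≠ 1) (hw : w ≠ 0) (h : c w ρ)
    (hwf : ∀ X ∈ idealFactors w, X = P ∨ X = Q) :
    idealFactors w = {P, Q} ∨
      (idealClass P ^ 2 = 1 ∧ (idealFactors w = {P, P} ∨ idealFactors w = {Q, Q})) := by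
  have hPQ : idealClass P * idealClass Q = 1 := by
    simpa [hρf] using prod_map_idealClass_idealFactors hρ
  have hQ : idealClass Q ≠ 1 := fun hQ => hP (by rwa [hQ, mul_one] at hPQ)
  by_cases hPw : P ∈ idealFactors w
  · by_cases hQw : Q ∈ idealFactors w
    · left
      refine hρf ▸ hc.idealFactors_eq_of_rel_of_le hO hw hρ h ?_
      rw [hρf, Multiset.le_iff_subset (by simp [hne])]
      simp [Multiset.insert_eq_cons, Multiset.cons_subset, hPw, hQw]
    · have hall : idealFactors w = Multiset.replicate (idealFactors w).card P :=
        Multiset.eq_replicate.mpr ⟨rfl, fun X hX =>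
          (hwf X hX).resolve_right fun hXQ => hQw (hXQ ▸ hX)⟩
      obtain ⟨hcard, hsq⟩ := hc.eq_two_of_rel_of_idealFactors_eq_replicate hO hρ
        (hρf.trans (Multiset.pair_comm P Q)) hP hw h hall
      exact Or.inr ⟨hsq, Or.inl (by rw [hall, hcard]; rfl)⟩
  · have hall : idealFactors w = Multiset.replicate (idealFactors w).card Q :=
      Multiset.eq_replicate.mpr ⟨rfl, fun X hX =>
        (hwf X hX).resolve_left fun hXP => hPw (hXP ▸ hX)⟩
    obtain ⟨hcard, hsq⟩ := hc.eq_two_of_rel_of_idealFactors_eq_replicate hO hρ hρf hQ hw h hall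
    refine Or.inr ⟨?_, Or.inr (by rw [hall, hcard]; rfl)⟩
    rw [← one_pow 2, ← hPQ, mul_pow, hsq, mul_one]

end IsTransferCon

end TransferCon

lemma exists_isIdempotentElem_pow {M : Type*} [Monoid M] [Finite M] (x : M) :
    ∃ n : ℕ, 0 < n ∧ IsIdempotentElem (x ^ n) := by
  obtain ⟨i, j, hij, hpow⟩ : ∃ i j : ℕ, i < j ∧ x ^ i = x ^ j := by
    obtain ⟨i, j, hne, hpow⟩ := Finite.exists_ne_map_eq_of_infinite (x ^ · : ℕ → M)
    exact hne.lt_or_gt.elim (fun h => ⟨i, j, h, hpow⟩) fun h => ⟨j, i, h, hpow.symm⟩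
  obtain ⟨d, hd, rfl⟩ : ∃ d, 0 < d ∧ j = d + i := ⟨j - i, by omega, by omega⟩
  have hperiod (k l : ℕ) : x ^ (i + k + l * d) = x ^ (i + k) := by
    induction l with
    | zero => rw [zero_mul, add_zero]
    | succ l ih =>
      rw [show i + k + (l + 1) * d = d + i + (k + l * d) by ring, pow_add, ← hpow, ← pow_add,
        ← add_assoc, ih]
  obtain ⟨k, hk⟩ := Nat.exists_eq_add_of_le (show i ≤ (i + 1) * d by nlinarith)
  refine ⟨(i + 1) * d, by positivity, ?_⟩
  have := hperiod k (i + 1)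
  rwa [← hk, pow_add] at this

-- The identity map is an element of the finite monoid `M → M`, so one exponent serves all of `M`.
lemma exists_forall_isIdempotentElem_pow (M : Type*) [Monoid M] [Finite M] :
    ∃ n : ℕ, 0 < n ∧ ∀ x : M, IsIdempotentElem (x ^ n) := by
  obtain ⟨n, hn, h⟩ := exists_isIdempotentElem_pow (id : M → M)
  exact ⟨n, hn, fun x => congrFun h x⟩

section Generators

variable {R : Type*} [CommRing R]

lemma exists_pow_sub_one_mem {I : Ideal R} [Finite (R ⧸ I)] {γ : R}
    (hγ : IsCoprime (Ideal.span {γ}) I) : ∃ n : ℕ, 0 < n ∧ γ ^ n - 1 ∈ I := by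
  obtain ⟨y, hy, z, hz, hyz⟩ := Ideal.isCoprime_iff_exists.mp hγ
  obtain ⟨x, rfl⟩ := Ideal.mem_span_singleton'.mp hy
  have hunit : IsUnit (Ideal.Quotient.mk I γ) := by
    refine IsUnit.of_mul_eq_one_right (Ideal.Quotient.mk I x) ?_
    rw [← map_mul, ← map_one (Ideal.Quotient.mk I), ← hyz, map_add,
      Ideal.Quotient.eq_zero_iff_mem.mpr hz, add_zero]
  obtain ⟨n, hn, hpow⟩ := hunit.isOfFinOrder.exists_pow_eq_one
  refine ⟨n, hn, ?_⟩
  rw [← Ideal.Quotient.eq_zero_iff_mem, map_sub, map_pow, hpow, map_one, sub_self]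

lemma mem_of_mem_conductor {O : Subring R} {x : R} (hx : x ∈ O.conductor) : x ∈ O := by
  simpa only [mul_one] using hx 1

lemma mem_of_mul_mem_of_isCoprime_conductor {O : Subring R} [Finite (R ⧸ O.conductor)] {γ b : R}
    (hγ : γ ∈ O) (hcop : IsCoprime (Ideal.span {γ}) O.conductor) (hb : γ * b ∈ O) : b ∈ O := by
  obtain ⟨n, hn, hpow⟩ := exists_pow_sub_one_mem hcop
  obtain ⟨k, rfl⟩ := Nat.exists_eq_add_of_le' hn
  have h := O.sub_mem (O.mul_mem (O.pow_mem hγ k) hb) (hpow b)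
  rwa [show γ ^ k * (γ * b) - (γ ^ (k + 1) - 1) * b = b by ring] at h

/-- The ideal `A` of `R` is principal, generated by an element of the subring `O`. -/
def HasGeneratorIn (O : Subring R) (A : Ideal R) : Prop :=
  ∃ a ∈ O, Ideal.span {a} = A

namespace HasGeneratorIn

lemma mul {O : Subring R} {A B : Ideal R} (hA : HasGeneratorIn O A) (hB : HasGeneratorIn O B) :
    HasGeneratorIn O (A * B) := by
  obtain ⟨a, ha, rfl⟩ := hA
  obtain ⟨b, hb, rfl⟩ := hB
  exact ⟨a * b, O.mul_mem ha hb, (Ideal.span_singleton_mul_span_singleton a b).symm⟩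

lemma of_mul_left [IsDedekindDomain R] {O : Subring R} [Finite (R ⧸ O.conductor)] {A B : Ideal R}
    (hA0 : A ≠ 0) (hcop : IsCoprime A O.conductor) (hA : HasGeneratorIn O A)
    (hAB : HasGeneratorIn O (A * B)) : HasGeneratorIn O B := by
  obtain ⟨a, ha, rfl⟩ := hA
  obtain ⟨x, hx, hxB⟩ := hAB
  obtain ⟨b, rfl⟩ : a ∣ x :=
    Ideal.span_singleton_le_span_singleton.mp (hxB.trans_le Ideal.mul_le_left)
  refine ⟨b, mem_of_mul_mem_of_isCoprime_conductor ha hcop hx, mul_left_cancel₀ hA0 ?_⟩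
  rw [Ideal.span_singleton_mul_span_singleton, hxB]

lemma of_idealFactors_eq [IsDedekindDomain R] {O : Subring R} {w : R} (hwO : w ∈ O) (hw : w ≠ 0)
    {m : Multiset (Ideal R)} (h : idealFactors w = m) : HasGeneratorIn O m.prod :=
  ⟨w, hwO, by rw [← h, prod_idealFactors hw]⟩

end HasGeneratorIn

/-- A nonzero prime ideal of `R` that is coprime to the conductor of `O`. -/
def IsRegularPrime (O : Subring R) (Q : Ideal R) : Prop :=
  Prime Q ∧ IsCoprime Q O.conductor

/-- A nonzero element of the order `O` that is coprime to the conductor. -/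
def IsRegularElement (O : Subring R) (x : R) : Prop :=
  x ∈ O ∧ x ≠ 0 ∧ IsCoprime (Ideal.span {x}) O.conductor

/-- Every element of `R` that is regular with respect to `O`, that is, coprime to the conductor,
is an `R`-unit multiple of an element of `O`. -/
def HasRegularGenerators (O : Subring R) : Prop :=
  ∀ x : R, x ≠ 0 → IsCoprime (Ideal.span {x}) O.conductor → HasGeneratorIn O (Ideal.span {x})

variable [IsDedekindDomain R]

lemma isCoprime_iff_not_le_of_prime {Q I : Ideal R} (hQ : Prime Q) :
    IsCoprime Q I ↔ ¬ I ≤ Q := by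
  rw [Ideal.isCoprime_iff_codisjoint,
    ((Ideal.isPrime_of_prime hQ).isMaximal hQ.ne_zero).out.not_le_iff_codisjoint]

lemma isRegularPrime_of_mem_idealFactors {O : Subring R} {x : R} (hx : x ≠ 0)
    (hcop : IsCoprime (Ideal.span {x}) O.conductor) {Q : Ideal R} (hQ : Q ∈ idealFactors x) :
    IsRegularPrime O Q := by
  obtain ⟨hprime, hxQ⟩ := (mem_idealFactors_iff hx).mp hQ
  exact ⟨hprime, hcop.of_isCoprime_of_dvd_left (Ideal.dvd_span_singleton.mpr hxQ)⟩

/-- `O` is an order in `R` for which the congruence `c` describes association in an overmonoid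
that makes `O` transfer Krull; the conductor quotient is finite, idempotents modulo the conductor
lie in `O`, and every ideal class contains a regular prime. -/
structure IsTransferOrder (O : Subring R) (c : Con R) : Prop extends IsTransferCon O c where
  conductor_ne_bot : O.conductor ≠ ⊥
  finite_quotient : Finite (R ⧸ O.conductor)
  mem_of_isIdempotent : ∀ {e : R}, e * e - e ∈ O.conductor → e ∈ O
  exists_regularPrime : ∀ g : ClassGroup R, ∃ Q, IsRegularPrime O Q ∧ idealClass Q = g

lemma IsTransferOrder.isUniformRootExtension {O : Subring R} {c : Con R}
    (hc : IsTransferOrder O c) : IsUniformRootExtension O := by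
  have := hc.finite_quotient
  obtain ⟨t, ht, h⟩ := exists_forall_isIdempotentElem_pow (R ⧸ O.conductor)
  refine ⟨t, ht, fun x => hc.mem_of_isIdempotent ?_⟩
  rw [← Ideal.Quotient.eq, map_mul, map_pow]
  exact h (Ideal.Quotient.mk O.conductor x)

end Generators

section InversePairs

variable {I G : Type*} [CommGroup G] {cl : I → G}

/-- `a'` is an element of class inverse to the nontrivial class of `a`, chosen to be `a` itself when
the class of `a` is its own inverse. -/
structure IsInversePair (cl : I → G) (a a' : I) : Prop where
  ne_one : cl a ≠ 1
  eq_inv : cl a' = (cl a)⁻¹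
  eq_of_sq_eq_one : cl a ^ 2 = 1 → a' = a

namespace IsInversePair

variable {a a' b b' d d' : I}

lemma ne_one' (h : IsInversePair cl a a') : cl a' ≠ 1 := by
  rw [h.eq_inv, Ne, inv_eq_one]
  exact h.ne_one

lemma eq_of_mul_eq_one (h : IsInversePair cl a a') {y : G} (hy : cl a * y = 1)
    (hy' : (cl a)⁻¹ * y = 1) : a' = a := by
  refine h.eq_of_sq_eq_one ?_
  rwa [← inv_mul_eq_one.mp hy', ← pow_two] at hy

lemma even_card_or_card_eq_one (h : IsInversePair cl a a') {s : Multiset I} (hs : s ≤ {a, a'}) :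
    (Even s.card ∧ (s.map cl).prod = 1) ∨
      (s.card = 1 ∧ (s.map cl).prod ≠ 1 ∧ (s = {a} ∨ s = {a'})) := by
  rw [Multiset.insert_eq_cons, ← Multiset.mem_powerset, Multiset.powerset_cons,
    ← Multiset.cons_zero a', Multiset.powerset_cons, Multiset.powerset_zero] at hs
  simp only [Multiset.map_singleton, Multiset.map_add, Multiset.mem_add,
    Multiset.mem_singleton] at hs
  rcases hs with (rfl | rfl) | rfl | rfl
  · simp
  · simp [h.ne_one']
  · simp [h.ne_one]
  · simp [h.eq_inv]

-- When the two choices are mixed, the index in the minority has a class of order at most two.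
lemma eq_or_eq_of_mul_mul_eq_one (ha : IsInversePair cl a a') (hb : IsInversePair cl b b')
    (hd : IsInversePair cl d d') (h : cl a * cl b * cl d = 1) {x y z : I} (hx : x = a ∨ x = a')
    (hy : y = b ∨ y = b') (hz : z = d ∨ z = d') (hxyz : cl x * cl y * cl z = 1) :
    (x = a ∧ y = b ∧ z = d) ∨ (x = a' ∧ y = b' ∧ z = d') := by
  have eq_a (h₁ : (cl a)⁻¹ * cl b * cl d = 1) : a' = a :=
    ha.eq_of_mul_eq_one (mul_assoc (cl a) _ _ ▸ h) (mul_assoc (cl a)⁻¹ _ _ ▸ h₁)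
  have eq_b (h₁ : cl a * (cl b)⁻¹ * cl d = 1) : b' = b :=
    hb.eq_of_mul_eq_one (mul_left_comm (cl b) _ _ ▸ mul_assoc (cl a) _ _ ▸ h)
      (mul_left_comm (cl b)⁻¹ _ _ ▸ mul_assoc (cl a) _ _ ▸ h₁)
  have eq_d (h₁ : cl a * cl b * (cl d)⁻¹ = 1) : d' = d :=
    hd.eq_of_mul_eq_one (mul_comm _ (cl d) ▸ h) (mul_comm _ (cl d)⁻¹ ▸ h₁)
  have invert {u v w : G} (huvw : u * v * w = 1) : u⁻¹ * v⁻¹ * w⁻¹ = 1 := by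
    rw [← mul_inv, ← mul_inv, huvw, inv_one]
  rcases hx with rfl | rfl <;> rcases hy with rfl | rfl <;> rcases hz with rfl | rfl
  · exact Or.inl ⟨rfl, rfl, rfl⟩
  all_goals simp only [ha.eq_inv, hb.eq_inv, hd.eq_inv] at hxyz
  · exact Or.inl ⟨rfl, rfl, eq_d hxyz⟩
  · exact Or.inl ⟨rfl, eq_b hxyz, rfl⟩
  · exact Or.inr ⟨(eq_a (by simpa only [inv_inv] using invert hxyz)).symm, rfl, rfl⟩
  · exact Or.inl ⟨eq_a hxyz, rfl, rfl⟩
  · exact Or.inr ⟨rfl, (eq_b (by simpa only [inv_inv] using invert hxyz)).symm, rfl⟩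
  · exact Or.inr ⟨rfl, rfl, (eq_d (by simpa only [inv_inv] using invert hxyz)).symm⟩
  · exact Or.inr ⟨rfl, rfl, rfl⟩

lemma eq_or_eq_of_prod_eq_one (ha : IsInversePair cl a a') (hb : IsInversePair cl b b')
    (hd : IsInversePair cl d d') (h : cl a * cl b * cl d = 1) {s : Multiset I}
    (hs : s ≤ {a, a'} + {b, b'} + {d, d'}) (hcard : s.card = 3) (hprod : (s.map cl).prod = 1) :
    s = {a, b, d} ∨ s = {a', b', d'} := by
  classical
  obtain ⟨s₁, s₂, s₃, rfl, h₁, h₂, h₃⟩ : ∃ s₁ s₂ s₃, s = s₁ + s₂ + s₃ ∧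
      s₁ ≤ {a, a'} ∧ s₂ ≤ {b, b'} ∧ s₃ ≤ {d, d'} := by
    have hsub : s - {d, d'} ≤ {a, a'} + {b, b'} := tsub_le_iff_right.mpr hs
    refine ⟨(s - {d, d'}) ∩ {a, a'}, s - {d, d'} - {a, a'}, s ∩ {d, d'}, ?_,
      Multiset.inter_le_right, tsub_le_iff_left.mpr hsub, Multiset.inter_le_right⟩
    rw [add_comm (_ ∩ _), Multiset.sub_add_inter, Multiset.sub_add_inter]
  rw [Multiset.card_add, Multiset.card_add] at hcard
  rw [Multiset.map_add, Multiset.map_add, Multiset.prod_add, Multiset.prod_add] at hprod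
  rcases ha.even_card_or_card_eq_one h₁ with ⟨⟨k₁, hk₁⟩, hp₁⟩ | ⟨hk₁, hp₁, hs₁⟩ <;>
  rcases hb.even_card_or_card_eq_one h₂ with ⟨⟨k₂, hk₂⟩, hp₂⟩ | ⟨hk₂, hp₂, hs₂⟩ <;>
  rcases hd.even_card_or_card_eq_one h₃ with ⟨⟨k₃, hk₃⟩, hp₃⟩ | ⟨hk₃, hp₃, hs₃⟩
  · omega
  · exact absurd (by rwa [hp₁, hp₂, one_mul, one_mul] at hprod) hp₃
  · exact absurd (by rwa [hp₁, hp₃, one_mul, mul_one] at hprod) hp₂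
  · omega
  · exact absurd (by rwa [hp₂, hp₃, mul_one, mul_one] at hprod) hp₁
  · omega
  · omega
  · obtain ⟨x, rfl⟩ := Multiset.card_eq_one.mp hk₁
    obtain ⟨y, rfl⟩ := Multiset.card_eq_one.mp hk₂
    obtain ⟨z, rfl⟩ := Multiset.card_eq_one.mp hk₃
    simp only [Multiset.map_singleton, Multiset.prod_singleton, Multiset.singleton_inj] at *
    rcases ha.eq_or_eq_of_mul_mul_eq_one hb hd h hs₁ hs₂ hs₃ hprod with
      ⟨rfl, rfl, rfl⟩ | ⟨rfl, rfl, rfl⟩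
    · exact Or.inl (add_assoc _ _ _)
    · exact Or.inr (add_assoc _ _ _)

end IsInversePair

end InversePairs

section BalancedFactorization

variable {R : Type*} [CommRing R] [IsDedekindDomain R] {O : Subring R} {c : Con R}

lemma IsTransferCon.exists_mem_rel (hc : IsTransferCon O c) (hO : IsUniformRootExtension O) {x : R}
    (hx : x ≠ 0) (hu : ¬ IsUnit x) :
    ∃ w ∈ O, w ≠ 0 ∧ ¬ IsUnit w ∧ idealFactors w ⊆ idealFactors x ∧ c w x := by
  obtain ⟨t, ht, m, hcard, hm, -⟩ := hc.exists_pow_lift hO hx (s := {x}) (by simp [hx, hu])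
    (by simpa using c.refl x)
  obtain ⟨w, hw⟩ := Multiset.card_pos_iff_exists_mem.mp
    (show 0 < m.card by simpa [hcard] using ht)
  obtain ⟨hwO, hw0, hwu, hwx, y, hy, hwy⟩ := hm w hw
  exact ⟨w, hwO, hw0, hwu, hwx, Multiset.mem_singleton.mp hy ▸ hwy⟩

lemma IsTransferCon.exists_balanced_factorization (hc : IsTransferCon O c)
    (hO : IsUniformRootExtension O) {s : Multiset R} {α β : R}
    (hs : ∀ y ∈ s, y ∈ O ∧ y ≠ 0 ∧ ¬ IsUnit y) (h : Associated s.prod (α * β))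
    (hcl : ∀ Q ∈ idealFactors s.prod, idealClass Q ≠ 1)
    (hα : (idealFactors α).card = s.card) (hβ : (idealFactors β).card = s.card) :
    ∃ v ∈ O, ∃ w ∈ O, s.prod = v * w ∧
      (idealFactors v).card = s.card ∧ (idealFactors w).card = s.card := by
  have hs0 : s.prod ≠ 0 := Multiset.prod_ne_zero fun h0 => (hs 0 h0).2.1 rfl
  have hαβ : α * β ≠ 0 := h.ne_zero_iff.mp hs0
  obtain ⟨hα0, hβ0⟩ := mul_ne_zero_iff.mp hαβ
  have hrel : c s.prod (α * β) := hc.rel_of_associated h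
  obtain ⟨v, hv, w, hw, hvw, hvα, hwβ⟩ :=
    hc.exists_eq_mul (O.multiset_prod_mem s fun y hy => (hs y hy).1) hs0 hα0 hβ0 hrel
  obtain ⟨hv0, hw0⟩ := mul_ne_zero_iff.mp (hvw ▸ hs0)
  have hfac : idealFactors s.prod = idealFactors v + idealFactors w := by
    rw [hvw, idealFactors_mul hv0 hw0]
  have hfac' : idealFactors s.prod = idealFactors α + idealFactors β := by
    rw [idealFactors_eq_of_associated h, idealFactors_mul hα0 hβ0]
  have two_mul_card_le {z γ : R} (hz : z ≠ 0) (hγ : γ ≠ 0)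
      (hzs : idealFactors z ≤ idealFactors s.prod) (hγs : idealFactors γ ≤ idealFactors s.prod)
      (hrelz : c (z * γ) s.prod) :
      2 * s.card ≤ (idealFactors z).card + (idealFactors γ).card := by
    rw [← Multiset.card_add, ← idealFactors_mul hz hγ]
    refine hc.two_mul_card_le_card_idealFactors hO (mul_ne_zero hz hγ) (fun Q hQ => hcl Q ?_)
      (fun y hy => (hs y hy).2) hrelz
    rw [idealFactors_mul hz hγ, Multiset.mem_add] at hQ
    exact hQ.elim (Multiset.mem_of_le hzs) (Multiset.mem_of_le hγs)
  have hvβ := two_mul_card_le hv0 hβ0 (hfac ▸ le_self_add) (hfac' ▸ le_add_self)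
    (c.trans (c.mul hvα (c.refl β)) (c.symm hrel))
  have hwα := two_mul_card_le hw0 hα0 (hfac ▸ le_add_self) (hfac' ▸ le_self_add)
    (c.trans (c.mul hwβ (c.refl α)) (c.symm (mul_comm α β ▸ hrel)))
  have hcard : (idealFactors v).card + (idealFactors w).card = s.card + s.card := by
    rw [← Multiset.card_add, ← hfac, hfac', Multiset.card_add, hα, hβ]
  exact ⟨v, hv, w, hw, hvw, by omega, by omega⟩

end BalancedFactorization

section RegularGenerators

variable {R : Type*} [CommRing R] [IsDedekindDomain R] {O : Subring R} {c : Con R}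

namespace IsTransferOrder

lemma hasGeneratorIn_of_idealClass_eq_one (hc : IsTransferOrder O c) {Q : Ideal R} (hQ : Prime Q)
    (h : idealClass Q = 1) : HasGeneratorIn O Q := by
  obtain ⟨x, hx, hxf⟩ := exists_idealFactors_eq (m := {Q}) (by simpa using hQ) (by simpa using h)
  obtain ⟨w, hwO, hw0, hwu, hwx, hwr⟩ := hc.exists_mem_rel hc.isUniformRootExtension hx
    fun hu => by simp [idealFactors_of_isUnit hu] at hxf
  rw [hxf] at hwx
  obtain ⟨X, hX⟩ := Multiset.exists_mem_of_ne_zero (mt (idealFactors_eq_zero_iff hw0).mp hwu)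
  have hQw : {Q} ≤ idealFactors w :=
    Multiset.singleton_le.mpr (Multiset.mem_singleton.mp (hwx hX) ▸ hX)
  rw [← Multiset.prod_singleton Q, ← hxf]
  exact .of_idealFactors_eq hwO hw0
    (hc.idealFactors_eq_of_rel_of_le hc.isUniformRootExtension hw0 hx hwr (hxf ▸ hQw))

lemma exists_idealFactors_eq_pair (hc : IsTransferOrder O c) {Q Q' : Ideal R} (hQ : Prime Q)
    (hQ' : Prime Q') (h : IsInversePair idealClass Q Q') :
    ∃ w ∈ O, w ≠ 0 ∧ idealFactors w = {Q, Q'} := by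
  have hO := hc.isUniformRootExtension
  obtain ⟨x, hx, hxf⟩ := exists_idealFactors_eq (m := {Q, Q'}) (by simp [hQ, hQ'])
    (by simp [h.eq_inv])
  obtain ⟨w, hwO, hw0, hwu, hwx, hwr⟩ := hc.exists_mem_rel hO hx
    fun hu => by simp [idealFactors_of_isUnit hu] at hxf
  rw [hxf] at hwx
  refine ⟨w, hwO, hw0, ?_⟩
  have hpair (X : Ideal R) (hX : X ∈ idealFactors w) : X = Q ∨ X = Q' := by
    simpa using hwx hX
  by_cases hsq : idealClass Q ^ 2 = 1
  · obtain rfl := h.eq_of_sq_eq_one hsq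
    have hall : idealFactors w = Multiset.replicate (idealFactors w).card Q' :=
      Multiset.eq_replicate.mpr ⟨rfl, fun X hX => or_self_iff.mp (hpair X hX)⟩
    have hcard := two_le_card_idealFactors hw0 hwu fun X hX =>
      or_self_iff.mp (hpair X hX) ▸ h.ne_one
    rw [← hxf]
    refine hc.idealFactors_eq_of_rel_of_le hO hw0 hx hwr ?_
    rw [hxf, hall]
    exact Multiset.replicate_mono Q' hcard
  · have hne : Q ≠ Q' := fun heq => hsq (by
      rw [pow_two]; nth_rw 2 [heq]; rw [h.eq_inv, mul_inv_cancel])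
    exact (hc.idealFactors_eq_of_rel_of_mem_pair hO hne hx hxf h.ne_one hw0 hwr hpair).resolve_right
      fun hsq' => hsq hsq'.1

lemma hasGeneratorIn_mul_of_isInversePair (hc : IsTransferOrder O c) {Q Q' : Ideal R} (hQ : Prime Q)
    (hQ' : Prime Q') (h : IsInversePair idealClass Q Q') : HasGeneratorIn O (Q * Q') := by
  obtain ⟨w, hwO, hw0, hwf⟩ := hc.exists_idealFactors_eq_pair hQ hQ' h
  rw [← Multiset.prod_pair]
  exact .of_idealFactors_eq hwO hw0 hwf

lemma exists_isInversePair (hc : IsTransferOrder O c) {Q : Ideal R} (hQ : IsRegularPrime O Q)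
    (h : idealClass Q ≠ 1) : ∃ Q', IsRegularPrime O Q' ∧ IsInversePair idealClass Q Q' := by
  by_cases hsq : idealClass Q ^ 2 = 1
  · exact ⟨Q, hQ, h, eq_inv_of_mul_eq_one_left (by rwa [← pow_two]), fun _ => rfl⟩
  · obtain ⟨Q', hQ', hinv⟩ := hc.exists_regularPrime (idealClass Q)⁻¹
    exact ⟨Q', hQ', h, hinv, fun hsq' => absurd hsq' hsq⟩

lemma exists_idealFactors_add_eq (hc : IsTransferOrder O c) {Q₁ Q₂ Q₃ S₁ S₂ S₃ : Ideal R}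
    (hQ₁ : Prime Q₁) (hQ₂ : Prime Q₂) (hQ₃ : Prime Q₃)
    (hS₁ : Prime S₁) (hS₂ : Prime S₂) (hS₃ : Prime S₃)
    (h₁ : IsInversePair idealClass Q₁ S₁) (h₂ : IsInversePair idealClass Q₂ S₂)
    (h₃ : IsInversePair idealClass Q₃ S₃)
    (h : idealClass Q₁ * idealClass Q₂ * idealClass Q₃ = 1) :
    ∃ v ∈ O, ∃ w ∈ O, v ≠ 0 ∧ w ≠ 0 ∧ (idealFactors v).card = 3 ∧
      idealFactors v + idealFactors w = {Q₁, S₁} + {Q₂, S₂} + {Q₃, S₃} := by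
  obtain ⟨a₁, ha₁O, ha₁, hf₁⟩ := hc.exists_idealFactors_eq_pair hQ₁ hS₁ h₁
  obtain ⟨a₂, ha₂O, ha₂, hf₂⟩ := hc.exists_idealFactors_eq_pair hQ₂ hS₂ h₂
  obtain ⟨a₃, ha₃O, ha₃, hf₃⟩ := hc.exists_idealFactors_eq_pair hQ₃ hS₃ h₃
  obtain ⟨α, hα, hfα⟩ := exists_idealFactors_eq (m := {Q₁, Q₂, Q₃})
    (by simp [hQ₁, hQ₂, hQ₃]) (by simpa [← mul_assoc] using h)
  obtain ⟨β, hβ, hfβ⟩ := exists_idealFactors_eq (m := {S₁, S₂, S₃}) (by simp [hS₁, hS₂, hS₃])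
    (by simpa [h₁.eq_inv, h₂.eq_inv, h₃.eq_inv, mul_comm, mul_left_comm] using inv_eq_one.mpr h)
  set s : Multiset R := {a₁, a₂, a₃} with hsdef
  have hs : ∀ y ∈ s, y ∈ O ∧ y ≠ 0 ∧ ¬ IsUnit y := by
    simp [hsdef, ha₁O, ha₂O, ha₃O, ha₁, ha₂, ha₃, ← idealFactors_eq_zero_iff, hf₁, hf₂, hf₃]
  have hs0 : s.prod ≠ 0 := Multiset.prod_ne_zero fun h0 => (hs 0 h0).2.1 rfl
  have hfs : idealFactors s.prod = {Q₁, S₁} + {Q₂, S₂} + {Q₃, S₃} := by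
    rw [idealFactors_multiset_prod fun y hy => (hs y hy).2.1]
    simp only [hsdef, Multiset.insert_eq_cons, Multiset.map_cons, Multiset.map_singleton,
      Multiset.sum_cons, Multiset.sum_singleton, hf₁, hf₂, hf₃, add_assoc]
  have hassoc : Associated s.prod (α * β) := by
    refine associated_of_idealFactors_eq hs0 (mul_ne_zero hα hβ) ?_
    rw [hfs, idealFactors_mul hα hβ, hfα, hfβ]
    simp only [Multiset.insert_eq_cons, ← Multiset.singleton_add]
    abel
  obtain ⟨v, hv, w, hw, hvw, hcard, -⟩ := hc.exists_balanced_factorization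
    hc.isUniformRootExtension hs hassoc
    (by simp [hfs, or_imp, forall_and, h₁.ne_one, h₂.ne_one, h₃.ne_one, h₁.ne_one', h₂.ne_one',
      h₃.ne_one'])
    (by simp [hfα, hsdef]) (by simp [hfβ, hsdef])
  obtain ⟨hv0, hw0⟩ := mul_ne_zero_iff.mp (hvw ▸ hs0)
  exact ⟨v, hv, w, hw, hv0, hw0, by simpa [hsdef] using hcard, by rw [← hfs, hvw,
    idealFactors_mul hv0 hw0]⟩

lemma hasGeneratorIn_mul_mul_of_ne_one (hc : IsTransferOrder O c) {Q₁ Q₂ Q₃ : Ideal R}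
    (h₁ : IsRegularPrime O Q₁) (h₂ : IsRegularPrime O Q₂) (h₃ : IsRegularPrime O Q₃)
    (hn₁ : idealClass Q₁ ≠ 1) (hn₂ : idealClass Q₂ ≠ 1) (hn₃ : idealClass Q₃ ≠ 1)
    (h : idealClass Q₁ * idealClass Q₂ * idealClass Q₃ = 1) :
    HasGeneratorIn O (Q₁ * Q₂ * Q₃) := by
  obtain ⟨S₁, hS₁, hp₁⟩ := hc.exists_isInversePair h₁ hn₁
  obtain ⟨S₂, hS₂, hp₂⟩ := hc.exists_isInversePair h₂ hn₂
  obtain ⟨S₃, hS₃, hp₃⟩ := hc.exists_isInversePair h₃ hn₃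
  obtain ⟨v, hv, w, hw, hv0, hw0, hcard, hvw⟩ :=
    hc.exists_idealFactors_add_eq h₁.1 h₂.1 h₃.1 hS₁.1 hS₂.1 hS₃.1 hp₁ hp₂ hp₃ h
  rw [show Q₁ * Q₂ * Q₃ = ({Q₁, Q₂, Q₃} : Multiset (Ideal R)).prod by simp [mul_assoc]]
  rcases hp₁.eq_or_eq_of_prod_eq_one hp₂ hp₃ h (hvw ▸ le_self_add) hcard
    (prod_map_idealClass_idealFactors hv0) with hfv | hfv
  · exact .of_idealFactors_eq hv hv0 hfv
  · refine .of_idealFactors_eq hw hw0 (add_left_cancel (a := idealFactors v) ?_)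
    rw [hvw, hfv]
    simp only [Multiset.insert_eq_cons, ← Multiset.singleton_add]
    abel

lemma hasGeneratorIn_mul (hc : IsTransferOrder O c)
    (hG : ∃ g k : ClassGroup R, g ≠ 1 ∧ k ≠ 1 ∧ g ≠ k) {Q₁ Q₂ : Ideal R}
    (h₁ : IsRegularPrime O Q₁) (h₂ : IsRegularPrime O Q₂)
    (h : idealClass Q₁ * idealClass Q₂ = 1) : HasGeneratorIn O (Q₁ * Q₂) := by
  by_cases hn₁ : idealClass Q₁ = 1
  · exact (hc.hasGeneratorIn_of_idealClass_eq_one h₁.1 hn₁).mul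
      (hc.hasGeneratorIn_of_idealClass_eq_one h₂.1 (by rwa [hn₁, one_mul] at h))
  have hn₂ : idealClass Q₂ ≠ 1 := fun hn₂ => hn₁ (by rwa [hn₂, mul_one] at h)
  obtain ⟨k, hk, hk₁⟩ : ∃ k : ClassGroup R, k ≠ 1 ∧ idealClass Q₁ * k ≠ 1 := by
    obtain ⟨g, k, hg, hk, hgk⟩ := hG
    by_cases hg₁ : idealClass Q₁ * g = 1
    · exact ⟨k, hk, fun hk₁ => hgk (mul_left_cancel (hg₁.trans hk₁.symm))⟩
    · exact ⟨g, hg, hg₁⟩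
  obtain ⟨Q₃, h₃, rfl⟩ := hc.exists_regularPrime k
  obtain ⟨Q₄, h₄, hQ₄⟩ := hc.exists_regularPrime (idealClass Q₁ * idealClass Q₃)⁻¹
  have hQ₄' : idealClass Q₄ ≠ 1 := by rwa [hQ₄, Ne, inv_eq_one]
  obtain ⟨S₃, hS₃, hpair₃⟩ := hc.exists_isInversePair h₃ hk
  obtain ⟨S₄, hS₄, hpair₄⟩ := hc.exists_isInversePair h₄ hQ₄'
  have hgen₃₄ := (hc.hasGeneratorIn_mul_of_isInversePair h₃.1 hS₃.1 hpair₃).mul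
    (hc.hasGeneratorIn_mul_of_isInversePair h₄.1 hS₄.1 hpair₄)
  have hgen := (hc.hasGeneratorIn_mul_mul_of_ne_one h₁ h₃ h₄ hn₁ hk hQ₄'
    (by rw [hQ₄, mul_inv_cancel])).mul
    (hc.hasGeneratorIn_mul_mul_of_ne_one h₂ hS₃ hS₄ hn₂ hpair₃.ne_one' hpair₄.ne_one' (by
      rw [hpair₃.eq_inv, hpair₄.eq_inv, hQ₄, inv_inv, mul_comm (idealClass Q₁), ← mul_assoc,
        inv_mul_cancel_right, mul_comm, h]))
  have := hc.finite_quotient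
  refine .of_mul_left
    (mul_ne_zero (mul_ne_zero h₃.1.ne_zero hS₃.1.ne_zero)
      (mul_ne_zero h₄.1.ne_zero hS₄.1.ne_zero))
    ((h₃.2.mul_left hS₃.2).mul_left (h₄.2.mul_left hS₄.2)) hgen₃₄ ?_
  rwa [show Q₃ * S₃ * (Q₄ * S₄) * (Q₁ * Q₂) = Q₁ * Q₃ * Q₄ * (Q₂ * S₃ * S₄) by ring]

lemma hasGeneratorIn_mul_mul (hc : IsTransferOrder O c)
    (hG : ∃ g k : ClassGroup R, g ≠ 1 ∧ k ≠ 1 ∧ g ≠ k) {Q₁ Q₂ Q₃ : Ideal R}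
    (h₁ : IsRegularPrime O Q₁) (h₂ : IsRegularPrime O Q₂) (h₃ : IsRegularPrime O Q₃)
    (h : idealClass Q₁ * idealClass Q₂ * idealClass Q₃ = 1) :
    HasGeneratorIn O (Q₁ * Q₂ * Q₃) := by
  by_cases hn₁ : idealClass Q₁ = 1
  · rw [mul_assoc]
    exact (hc.hasGeneratorIn_of_idealClass_eq_one h₁.1 hn₁).mul
      (hc.hasGeneratorIn_mul hG h₂ h₃ (by rwa [hn₁, one_mul] at h))
  by_cases hn₂ : idealClass Q₂ = 1
  · rw [mul_right_comm]
    exact (hc.hasGeneratorIn_mul hG h₁ h₃ (by rwa [hn₂, mul_one] at h)).mul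
      (hc.hasGeneratorIn_of_idealClass_eq_one h₂.1 hn₂)
  by_cases hn₃ : idealClass Q₃ = 1
  · exact (hc.hasGeneratorIn_mul hG h₁ h₂ (by rwa [hn₃, mul_one] at h)).mul
      (hc.hasGeneratorIn_of_idealClass_eq_one h₃.1 hn₃)
  exact hc.hasGeneratorIn_mul_mul_of_ne_one h₁ h₂ h₃ hn₁ hn₂ hn₃ h

lemma exists_hasGeneratorIn_prod_mul (hc : IsTransferOrder O c)
    (hG : ∃ g k : ClassGroup R, g ≠ 1 ∧ k ≠ 1 ∧ g ≠ k) {m : Multiset (Ideal R)}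
    (hm : ∀ Q ∈ m, IsRegularPrime O Q) :
    ∃ Q, IsRegularPrime O Q ∧ HasGeneratorIn O (m.prod * Q) := by
  induction m using Multiset.induction_on with
  | empty =>
    obtain ⟨Q, hQ, hcl⟩ := hc.exists_regularPrime 1
    exact ⟨Q, hQ, by simpa using hc.hasGeneratorIn_of_idealClass_eq_one hQ.1 hcl⟩
  | cons Q₁ m ih =>
    rw [Multiset.forall_mem_cons] at hm
    obtain ⟨Q', hQ', hgen⟩ := ih hm.2
    obtain ⟨S, hS, hclS⟩ := hc.exists_regularPrime (idealClass Q')⁻¹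
    obtain ⟨T, hT, hclT⟩ := hc.exists_regularPrime (idealClass Q₁ * idealClass S)⁻¹
    have := hc.finite_quotient
    refine ⟨T, hT, .of_mul_left (mul_ne_zero hQ'.1.ne_zero hS.1.ne_zero) (hQ'.2.mul_left hS.2)
      (hc.hasGeneratorIn_mul hG hQ' hS (by rw [hclS, mul_inv_cancel])) ?_⟩
    have hQST := hc.hasGeneratorIn_mul_mul hG hm.1 hS hT (by rw [hclT, mul_inv_cancel])
    rw [Multiset.prod_cons, show Q' * S * (Q₁ * m.prod * T) = m.prod * Q' * (Q₁ * S * T) by ring]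
    exact hgen.mul hQST

lemma hasRegularGenerators_of_exists_ne (hc : IsTransferOrder O c)
    (hG : ∃ g k : ClassGroup R, g ≠ 1 ∧ k ≠ 1 ∧ g ≠ k) : HasRegularGenerators O := by
  intro x hx hcop
  obtain ⟨Q, hQ, hgen⟩ := hc.exists_hasGeneratorIn_prod_mul hG
    fun Q hQ => isRegularPrime_of_mem_idealFactors hx hcop hQ
  rw [prod_idealFactors hx] at hgen
  have hcl : idealClass Q = 1 := by
    obtain ⟨a, -, ha⟩ := hgen
    have hx' := span_singleton_ne_zero hx
    have := (idealClass_eq_one_iff (mul_ne_zero hx' hQ.1.ne_zero)).mpr ⟨a, ha⟩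
    rwa [idealClass_mul hx' hQ.1.ne_zero, idealClass_span_singleton hx, one_mul] at this
  have := hc.finite_quotient
  exact .of_mul_left hQ.1.ne_zero hQ.2 (hc.hasGeneratorIn_of_idealClass_eq_one hQ.1 hcl)
    (by rwa [mul_comm])

end IsTransferOrder

end RegularGenerators

section RegularIdeals

variable {R : Type*} [CommRing R] {O : Subring R}

lemma map_comap_subtype_of_isCoprime_conductor {A : Ideal R} (hA : IsCoprime A O.conductor) :
    (A.comap O.subtype).map O.subtype = A := by
  refine le_antisymm Ideal.map_comap_le fun x hx => ?_
  obtain ⟨i, hi, e, he, hie⟩ := Ideal.isCoprime_iff_exists.mp hA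
  have hiO : i ∈ O := by
    rw [eq_sub_of_add_eq hie]
    exact O.sub_mem O.one_mem (mem_of_mem_conductor he)
  rw [← mul_one x, ← hie, mul_add]
  refine Ideal.add_mem _ (Ideal.mul_mem_left _ x ?_) ?_
  · exact Ideal.mem_map_of_mem O.subtype (I := A.comap O.subtype) (x := ⟨i, hiO⟩) hi
  · exact Ideal.mem_map_of_mem O.subtype (I := A.comap O.subtype)
      (x := ⟨x * e, mul_comm e x ▸ he x⟩) (A.mul_mem_right e hx)

lemma isCoprime_comap_subtype_conductor {A : Ideal R} (hA : IsCoprime A O.conductor) :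
    IsCoprime (A.comap O.subtype) (O.conductor.comap O.subtype) := by
  obtain ⟨i, hi, e, he, hie⟩ := Ideal.isCoprime_iff_exists.mp hA
  have heO := mem_of_mem_conductor he
  refine Ideal.isCoprime_iff_exists.mpr ⟨1 - ⟨e, heO⟩, ?_, ⟨e, heO⟩, he, sub_add_cancel _ _⟩
  rwa [Ideal.mem_comap, map_sub, map_one, Subring.subtype_apply, ← hie, add_sub_cancel_right]

lemma comap_map_subtype_of_isCoprime_conductor {J : Ideal O}
    (hJ : IsCoprime J (O.conductor.comap O.subtype)) : (J.map O.subtype).comap O.subtype = J := by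
  refine le_antisymm (fun x hx => ?_) Ideal.le_comap_map
  obtain ⟨i, hi, e, he, hie⟩ := Ideal.isCoprime_iff_exists.mp hJ
  have hmul : ∀ y ∈ J.map O.subtype, ∀ d ∈ O.conductor, ∃ z ∈ J, (z : R) = y * d :=
      fun y hy => by
    induction hy using Submodule.span_induction with
    | mem y hy =>
      obtain ⟨j, hj, rfl⟩ := hy
      exact fun d hd => ⟨j * ⟨d, mem_of_mem_conductor hd⟩, J.mul_mem_right _ hj, rfl⟩
    | zero => exact fun d _ => ⟨0, J.zero_mem, (zero_mul d).symm⟩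
    | add y y' _ _ ih ih' =>
      intro d hd
      obtain ⟨z, hz, hzy⟩ := ih d hd
      obtain ⟨z', hz', hzy'⟩ := ih' d hd
      exact ⟨z + z', J.add_mem hz hz', by rw [O.coe_add, hzy, hzy', add_mul]⟩
    | smul r y _ ih =>
      intro d hd
      obtain ⟨z, hz, hzy⟩ := ih (r * d) (Ideal.mul_mem_left _ r hd)
      exact ⟨z, hz, by rw [hzy, smul_eq_mul]; ring⟩
  obtain ⟨z, hz, hzx⟩ := hmul x hx e he
  rw [← mul_one x, ← hie, mul_add, show x * e = z from Subtype.ext hzx.symm]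
  exact J.add_mem (J.mul_mem_left x hi) hz

lemma comap_subtype_mul_of_isCoprime_conductor {A B : Ideal R} (hA : IsCoprime A O.conductor)
    (hB : IsCoprime B O.conductor) :
    (A * B).comap O.subtype = A.comap O.subtype * B.comap O.subtype := by
  have h := (isCoprime_comap_subtype_conductor hA).mul_left (isCoprime_comap_subtype_conductor hB)
  rw [← comap_map_subtype_of_isCoprime_conductor h, Ideal.map_mul,
    map_comap_subtype_of_isCoprime_conductor hA, map_comap_subtype_of_isCoprime_conductor hB]

lemma comap_subtype_span_singleton [Finite (R ⧸ O.conductor)] {γ : O}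
    (hγ : IsCoprime (Ideal.span {(γ : R)}) O.conductor) :
    (Ideal.span {(γ : R)}).comap O.subtype = Ideal.span {γ} := by
  refine le_antisymm (fun x hx => ?_) ?_
  · obtain ⟨b, hb⟩ := Ideal.mem_span_singleton.mp (Ideal.mem_comap.mp hx)
    have hbO := mem_of_mul_mem_of_isCoprime_conductor γ.2 hγ
      (by rw [← hb]; exact x.2)
    exact Ideal.mem_span_singleton.mpr ⟨⟨b, hbO⟩, Subtype.ext hb⟩
  · exact (Ideal.span_singleton_le_iff_mem _).mpr (Ideal.mem_span_singleton_self (γ : R))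

lemma exists_fractionalIdeal_unit_eq_comap [IsDomain R] [Finite (R ⧸ O.conductor)]
    {A B : Ideal R} (hA : IsCoprime A O.conductor) (hB : IsCoprime B O.conductor)
    (hAB0 : A * B ≠ 0) (hAB : HasGeneratorIn O (A * B)) :
    ∃ I : (FractionalIdeal O⁰ (FractionRing O))ˣ,
      (I : FractionalIdeal O⁰ (FractionRing O)) = (A.comap O.subtype : Ideal O) := by
  obtain ⟨a, haO, ha⟩ := hAB
  lift a to O using haO
  have ha0 : algebraMap O (FractionRing O) a ≠ 0 := by
    rw [ne_eq, FaithfulSMul.algebraMap_eq_zero_iff]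
    rintro rfl
    exact ne_zero_of_span_singleton_eq hAB0 ha rfl
  have hmul : (A.comap O.subtype : FractionalIdeal O⁰ (FractionRing O)) *
      (B.comap O.subtype : Ideal O) =
        toPrincipalIdeal O (FractionRing O) (Units.mk0 _ ha0) := by
    rw [← FractionalIdeal.coeIdeal_mul, ← comap_subtype_mul_of_isCoprime_conductor hA hB, ← ha,
      comap_subtype_span_singleton (ha ▸ hA.mul_left hB), FractionalIdeal.coeIdeal_span_singleton,
      coe_toPrincipalIdeal, Units.val_mk0]
  obtain ⟨I, hI⟩ := isUnit_of_mul_isUnit_left (hmul ▸ Units.isUnit _)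
  exact ⟨I, hI⟩

variable [IsDedekindDomain R] {c : Con R}

lemma hasGeneratorIn_of_classGroupMk_eq_one {A : Ideal R} (hA : IsCoprime A O.conductor)
    {I : (FractionalIdeal O⁰ (FractionRing O))ˣ}
    (hI : (I : FractionalIdeal O⁰ (FractionRing O)) = (A.comap O.subtype : Ideal O))
    (h : ClassGroup.mk (FractionRing O) I = 1) : HasGeneratorIn O A := by
  obtain ⟨y, -, hy⟩ := (ClassGroup.mk_eq_one_of_coe_ideal hI).mp h
  refine ⟨y, y.2, ?_⟩
  rw [← map_comap_subtype_of_isCoprime_conductor hA, hy, Ideal.map_span, Set.image_singleton,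
    Subring.subtype_apply]

lemma extendedHom_mk_of_eq_comap {A : Ideal R} (hA0 : A ≠ 0) (hA : IsCoprime A O.conductor)
    {I : (FractionalIdeal O⁰ (FractionRing O))ˣ}
    (hI : (I : FractionalIdeal O⁰ (FractionRing O)) = (A.comap O.subtype : Ideal O)) :
    ClassGroup.extendedHom O R (ClassGroup.mk (FractionRing O) I) = idealClass A := by
  rw [ClassGroup.extendedHom_mk, idealClass_eq_mk0 (mem_nonZeroDivisors_of_ne_zero hA0),
    ← ClassGroup.mk_mk0 (FractionRing R)]
  congr 1
  refine Units.ext ?_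
  rw [FractionalIdeal.coe_mk0, Units.coe_map, hI]
  exact (FractionalIdeal.extendedHom_coeIdeal_eq_map (L := FractionRing R) (B := R) _).trans
    (congrArg _ (map_comap_subtype_of_isCoprime_conductor hA))

namespace IsTransferOrder

lemma exists_hasGeneratorIn_mul (hc : IsTransferOrder O c) {A : Ideal R} (hA0 : A ≠ 0)
    (hA : IsCoprime A O.conductor) :
    ∃ B : Ideal R, B ≠ 0 ∧ IsCoprime B O.conductor ∧ HasGeneratorIn O (A * B) := by
  obtain ⟨t, ht, hpow⟩ := hc.isUniformRootExtension
  obtain ⟨Q, hQ, hQA⟩ := hc.exists_regularPrime (idealClass A)⁻¹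
  have hAQ : A * Q ≠ 0 := mul_ne_zero hA0 hQ.1.ne_zero
  obtain ⟨x, hx⟩ := (idealClass_eq_one_iff hAQ).mp
    (by rw [idealClass_mul hA0 hQ.1.ne_zero, hQA, mul_inv_cancel])
  refine ⟨Q * (A * Q) ^ (t - 1), mul_ne_zero hQ.1.ne_zero (pow_ne_zero _ hAQ),
    hQ.2.mul_left (hA.mul_left hQ.2).pow_left, x ^ t, hpow x, ?_⟩
  rw [← Ideal.span_singleton_pow, hx, ← mul_assoc, mul_pow_sub_one ht.ne']

lemma exists_fractionalIdeal_unit_eq_comap (hc : IsTransferOrder O c) {A : Ideal R}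
    (hA0 : A ≠ 0) (hA : IsCoprime A O.conductor) :
    ∃ I : (FractionalIdeal O⁰ (FractionRing O))ˣ,
      (I : FractionalIdeal O⁰ (FractionRing O)) = (A.comap O.subtype : Ideal O) := by
  have := hc.finite_quotient
  obtain ⟨B, hB0, hB, hAB⟩ := hc.exists_hasGeneratorIn_mul hA0 hA
  exact _root_.exists_fractionalIdeal_unit_eq_comap hA hB (mul_ne_zero hA0 hB0) hAB

lemma extendedHom_surjective (hc : IsTransferOrder O c) :
    Function.Surjective (ClassGroup.extendedHom O R) := fun g => by
  obtain ⟨Q, hQ, rfl⟩ := hc.exists_regularPrime g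
  obtain ⟨I, hI⟩ := hc.exists_fractionalIdeal_unit_eq_comap hQ.1.ne_zero hQ.2
  exact ⟨_, extendedHom_mk_of_eq_comap hQ.1.ne_zero hQ.2 hI⟩

lemma hasRegularGenerators_of_finite (hc : IsTransferOrder O c) [Finite (ClassGroup R)]
    (ψ : ClassGroup O ≃* ClassGroup R) : HasRegularGenerators O := fun x hx hcop => by
  have := Finite.of_equiv _ ψ.symm.toEquiv
  have hinj : Function.Injective (ClassGroup.extendedHom O R) :=
    (Finite.injective_iff_surjective_of_equiv ψ.toEquiv).mpr hc.extendedHom_surjective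
  have hx' := span_singleton_ne_zero hx
  obtain ⟨I, hI⟩ := hc.exists_fractionalIdeal_unit_eq_comap hx' hcop
  refine hasGeneratorIn_of_classGroupMk_eq_one hcop hI (hinj ?_)
  rw [extendedHom_mk_of_eq_comap hx' hcop hI, map_one, idealClass_span_singleton hx]

theorem hasRegularGenerators (hc : IsTransferOrder O c) (ψ : ClassGroup O ≃* ClassGroup R) :
    HasRegularGenerators O := by
  by_cases hG : ∃ g k : ClassGroup R, g ≠ 1 ∧ k ≠ 1 ∧ g ≠ k
  · exact hc.hasRegularGenerators_of_exists_ne hG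
  · push Not at hG
    have : Finite (ClassGroup R) := by
      refine Finite.of_injective (fun g : ClassGroup R => g = 1) fun g k h => ?_
      by_cases hg : g = 1
      · rw [hg, (iff_of_eq h).mp hg]
      · exact hG g k hg fun hk => hg ((iff_of_eq h).mpr hk)
    exact hc.hasRegularGenerators_of_finite ψ

lemma exists_units_mul_mem (hc : IsTransferOrder O c) (hgen : HasRegularGenerators O)
    {X A B : Ideal R} {a b : R} (hA : IsCoprime A O.conductor) (hB : IsCoprime B O.conductor)
    (haO : a ∈ O) (ha0 : a ≠ 0) (hb0 : b ≠ 0) (ha : Ideal.span {a} = X * A)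
    (hb : Ideal.span {b} = X * B) :
    ∃ ε : Rˣ, ε * b ∈ O ∧ ∃ γ δ, IsRegularElement O γ ∧ IsRegularElement O δ ∧
      a * δ = ε * b * γ := by
  have := hc.finite_quotient
  have hA0 : A ≠ 0 := right_ne_zero_of_mul (ha ▸ span_singleton_ne_zero ha0)
  have hB0 : B ≠ 0 := right_ne_zero_of_mul (hb ▸ span_singleton_ne_zero hb0)
  obtain ⟨C, hC0, hC, γ, hγO, hγ⟩ := hc.exists_hasGeneratorIn_mul hA0 hA
  have hspan : Ideal.span {b * γ} = Ideal.span {a} * (B * C) := by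
    rw [← Ideal.span_singleton_mul_span_singleton, ha, hb, hγ]
    ring
  obtain ⟨δ', hδ'⟩ : a ∣ b * γ :=
    Ideal.span_singleton_le_span_singleton.mp (hspan.trans_le Ideal.mul_le_left)
  have hδ'BC : Ideal.span {δ'} = B * C := by
    rw [hδ', ← Ideal.span_singleton_mul_span_singleton] at hspan
    exact mul_left_cancel₀ (span_singleton_ne_zero ha0) hspan
  have hδ'0 : δ' ≠ 0 := ne_zero_of_span_singleton_eq (mul_ne_zero hB0 hC0) hδ'BC
  have hδ'cop : IsCoprime (Ideal.span {δ'}) O.conductor := hδ'BC ▸ hB.mul_left hC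
  obtain ⟨δ, hδO, hδ⟩ := hgen δ' hδ'0 hδ'cop
  obtain ⟨ε, rfl⟩ := Ideal.span_singleton_eq_span_singleton.mp hδ.symm
  have hγcop : IsCoprime (Ideal.span {γ}) O.conductor := hγ ▸ hA.mul_left hC
  have hmul : a * (δ' * ε) = ε * b * γ := by linear_combination -(ε : R) * hδ'
  refine ⟨ε, ?_, γ, δ' * ε, ⟨hγO, ne_zero_of_span_singleton_eq (mul_ne_zero hA0 hC0) hγ, hγcop⟩,
    ⟨hδO, mul_ne_zero hδ'0 ε.ne_zero, hδ.symm ▸ hδ'cop⟩, hmul⟩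
  refine mem_of_mul_mem_of_isCoprime_conductor hγO hγcop ?_
  rw [mul_comm, ← hmul]
  exact O.mul_mem haO hδO

end IsTransferOrder

end RegularIdeals

section ConductorFactors

open UniqueFactorizationMonoid

variable {R : Type*} [CommRing R] [IsDedekindDomain R] {O : Subring R} {P : Ideal R}

open Classical in
/-- The prime factors of the ideal `aR` that divide the conductor of `O`, with multiplicity. -/
noncomputable def conductorFactors (O : Subring R) (a : R) : Multiset (Ideal R) :=
  (idealFactors a).filter (O.conductor ≤ ·)

lemma conductorFactors_mul (O : Subring R) {a b : R} (ha : a ≠ 0) (hb : b ≠ 0) :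
    conductorFactors O (a * b) = conductorFactors O a + conductorFactors O b := by
  rw [conductorFactors, idealFactors_mul ha hb, Multiset.filter_add]
  rfl

lemma conductorFactors_pow (O : Subring R) (a : R) (n : ℕ) :
    conductorFactors O (a ^ n) = n • conductorFactors O a := by
  rw [conductorFactors, idealFactors_pow, Multiset.filter_nsmul]
  rfl

lemma conductorFactors_of_isUnit (O : Subring R) {a : R} (ha : IsUnit a) :
    conductorFactors O a = 0 := by
  rw [conductorFactors, idealFactors_of_isUnit ha, Multiset.filter_zero]

lemma conductorFactors_multiset_prod (O : Subring R) {s : Multiset R} (hs : ∀ x ∈ s, x ≠ 0) :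
    conductorFactors O s.prod = (s.map (conductorFactors O)).sum := by
  induction s using Multiset.induction_on with
  | empty => rw [Multiset.prod_zero, conductorFactors_of_isUnit O isUnit_one]; rfl
  | cons x s ih =>
    rw [Multiset.forall_mem_cons] at hs
    rw [Multiset.prod_cons, conductorFactors_mul O hs.1
      (Multiset.prod_ne_zero fun h0 => hs.2 0 h0 rfl), ih hs.2, Multiset.map_cons,
      Multiset.sum_cons]

lemma IsRegularElement.conductorFactors_eq_zero {a : R} (ha : IsRegularElement O a) :
    conductorFactors O a = 0 := by
  classical
  refine Multiset.filter_eq_nil.mpr fun Q hQ => ?_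
  have hQr := isRegularPrime_of_mem_idealFactors ha.2.1 ha.2.2 hQ
  exact (isCoprime_iff_not_le_of_prime hQr.1).mp hQr.2

lemma exists_span_eq_prod_conductorFactors_mul (O : Subring R) {a : R} (ha : a ≠ 0) :
    ∃ A, IsCoprime A O.conductor ∧ Ideal.span {a} = (conductorFactors O a).prod * A := by
  classical
  refine ⟨((idealFactors a).filter (¬ O.conductor ≤ ·)).prod, ?_, ?_⟩
  · refine Submonoid.multiset_prod_mem
      ({ carrier := {A | IsCoprime A O.conductor}
         mul_mem' := IsCoprime.mul_left, one_mem' := isCoprime_one_left } : Submonoid (Ideal R))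
      _ fun Q hQ => ?_
    rw [Multiset.mem_filter] at hQ
    exact (isCoprime_iff_not_le_of_prime (prime_of_mem_idealFactors hQ.1)).mpr hQ.2
  · rw [conductorFactors, ← Multiset.prod_add, Multiset.filter_add_not, prod_idealFactors ha]

lemma idealVal_mul (P : Ideal R) {a b : R} (ha : a ≠ 0) (hb : b ≠ 0) :
    idealVal P (a * b) = idealVal P a + idealVal P b := by
  classical
  rw [idealVal_eq_count, idealVal_eq_count, idealVal_eq_count, idealFactors_mul ha hb,
    Multiset.count_add]

lemma idealVal_pow (P : Ideal R) (a : R) (n : ℕ) : idealVal P (a ^ n) = n * idealVal P a := by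
  classical
  rw [idealVal_eq_count, idealVal_eq_count, idealFactors_pow, Multiset.count_nsmul]

lemma idealVal_eq_zero_iff (hP : Prime P) {a : R} (ha : a ≠ 0) : idealVal P a = 0 ↔ a ∉ P := by
  classical
  rw [idealVal_eq_count, Multiset.count_eq_zero, mem_idealFactors_iff ha, and_iff_right hP]

lemma mem_pow_iff_le_idealVal (hP : Prime P) {a : R} (ha : a ≠ 0) {j : ℕ} :
    a ∈ P ^ j ↔ j ≤ idealVal P a := by
  classical
  rw [idealVal_eq_count, Multiset.le_count_iff_replicate_le, ← Ideal.dvd_span_singleton,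
    dvd_iff_normalizedFactors_le_normalizedFactors (pow_ne_zero _ hP.ne_zero)
      (span_singleton_ne_zero ha),
    normalizedFactors_pow, normalizedFactors_irreducible hP.irreducible, normalize_eq,
    Multiset.nsmul_singleton]
  rfl

lemma idealVal_eq_count_conductorFactors [DecidableEq (Ideal R)] (hPf : O.conductor ≤ P) (a : R) :
    idealVal P a = (conductorFactors O a).count P := by
  classical
  rw [idealVal_eq_count, conductorFactors, Multiset.count_filter_of_pos hPf]

lemma conductorFactors_eq_replicate_idealVal (hPf : O.conductor ≤ P) {a : R}
    (h : ∀ Q ∈ idealFactors a, O.conductor ≤ Q → Q = P) :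
    conductorFactors O a = Multiset.replicate (idealVal P a) P := by
  classical
  rw [idealVal_eq_count, ← Multiset.filter_eq', conductorFactors]
  exact Multiset.filter_congr fun Q hQ => ⟨h Q hQ, fun hQP => hQP ▸ hPf⟩

lemma IsTransferOrder.exists_units_mul_mem_of_conductorFactors_eq {c : Con R}
    (hc : IsTransferOrder O c) (hgen : HasRegularGenerators O) {a b : R} (haO : a ∈ O)
    (ha0 : a ≠ 0) (hb0 : b ≠ 0) (hab : conductorFactors O a = conductorFactors O b) :
    ∃ ε : Rˣ, ε * b ∈ O ∧ ∃ γ δ, IsRegularElement O γ ∧ IsRegularElement O δ ∧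
      a * δ = ε * b * γ := by
  obtain ⟨A, hA, haA⟩ := exists_span_eq_prod_conductorFactors_mul O ha0
  obtain ⟨B, hB, hbB⟩ := exists_span_eq_prod_conductorFactors_mul O hb0
  exact hc.exists_units_mul_mem hgen hA hB haO ha0 hb0 haA (hab ▸ hbB)

end ConductorFactors

section AdmissibleValuations

variable {R : Type*} [CommRing R] [IsDedekindDomain R] {O : Subring R} {c : Con R} {P : Ideal R}

/-- The valuations at `P` that the theorem allows for a local atom: `1`, or at most `2` when the
class of `P` has order two. -/
def IsAdmissibleVal (P : Ideal R) (j : ℕ) : Prop :=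
  j = 1 ∨ (idealClass P ≠ 1 ∧ idealClass P ^ 2 = 1 ∧ j ≤ 2)

lemma IsAdmissibleVal.eq_one_of_odd {j : ℕ} (hj : IsAdmissibleVal P j) (hodd : Odd j) : j = 1 := by
  obtain hj | ⟨-, -, hj⟩ := hj
  · exact hj
  · interval_cases j <;> simp_all [Nat.odd_iff]

namespace IsTransferOrder

lemma exists_conductorFactors_eq_singleton (hc : IsTransferOrder O c) (hP : Prime P)
    (hPf : O.conductor ≤ P) :
    ∃ ρ : R, ρ ≠ 0 ∧ conductorFactors O ρ = {P} ∧ ∀ w, w ≠ 0 → c w ρ →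
      idealFactors w ⊆ idealFactors ρ →
        ∃ j, IsAdmissibleVal P j ∧ conductorFactors O w = Multiset.replicate j P := by
  have hO := hc.isUniformRootExtension
  by_cases hcl : idealClass P = 1
  · obtain ⟨ρ, hρ, hρf⟩ := exists_idealFactors_eq (m := {P}) (by simpa) (by simpa)
    have hρu : ¬ IsUnit ρ := fun hu => by simp [idealFactors_of_isUnit hu] at hρf
    refine ⟨ρ, hρ, by simp [conductorFactors, hρf, Multiset.filter_singleton, hPf],
      fun w hw hwρ hsub => ⟨1, Or.inl rfl, ?_⟩⟩
    have hwf : idealFactors w ≠ 0 := fun h =>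
      hc.not_isUnit_of_rel hO hρ hρu hwρ ((idealFactors_eq_zero_iff hw).mp h)
    obtain ⟨Q, hQ⟩ := Multiset.exists_mem_of_ne_zero hwf
    obtain rfl : Q = P := by simpa [hρf] using hsub hQ
    have hwf' : idealFactors w = {Q} := hρf ▸ hc.idealFactors_eq_of_rel_of_le hO hw hρ hwρ
      (by rwa [hρf, Multiset.singleton_le])
    simp [conductorFactors, hwf', Multiset.filter_singleton, hPf]
  · obtain ⟨Q, ⟨hQ, hQf⟩, hPQ⟩ := hc.exists_regularPrime (idealClass P)⁻¹
    rw [isCoprime_iff_not_le_of_prime hQ] at hQf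
    obtain ⟨ρ, hρ, hρf⟩ := exists_idealFactors_eq (m := {P, Q}) (by simp [hP, hQ]) (by simp [hPQ])
    have hPQf : ∀ x : R, idealFactors x = {P, Q} → conductorFactors O x = {P} := fun x hx => by
      simp [conductorFactors, hx, Multiset.filter_singleton, hPf, hQf]
    refine ⟨ρ, hρ, hPQf ρ hρf, fun w hw hwρ hsub => ?_⟩
    have hwf : ∀ X ∈ idealFactors w, X = P ∨ X = Q := fun X hX => by simpa [hρf] using hsub hX
    obtain h | ⟨hsq, h | h⟩ := hc.idealFactors_eq_of_rel_of_mem_pair hO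
      (by rintro rfl; exact hQf hPf) hρ hρf hcl hw hwρ hwf
    · exact ⟨1, Or.inl rfl, by rw [hPQf w h, Multiset.replicate_one]⟩
    · refine ⟨2, Or.inr ⟨hcl, hsq, le_rfl⟩, ?_⟩
      simp [conductorFactors, h, hPf, Multiset.replicate_succ]
    · exact ⟨0, Or.inr ⟨hcl, hsq, zero_le_two⟩, by simp [conductorFactors, h, hQf]⟩

lemma exists_admissible_factorization (hc : IsTransferOrder O c) (hgen : HasRegularGenerators O)
    (hP : Prime P) (hPf : O.conductor ≤ P) {a : R} (haO : a ∈ O) (ha0 : a ≠ 0) {m : ℕ}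
    (ha : conductorFactors O a = Multiset.replicate m P) :
    ∃ s : Multiset R, (∀ w ∈ s, w ∈ O ∧ w ≠ 0 ∧
        ∃ j, IsAdmissibleVal P j ∧ conductorFactors O w = Multiset.replicate j P) ∧
      ∃ x y, IsRegularElement O x ∧ IsRegularElement O y ∧ a * x = s.prod * y := by
  obtain ⟨ρ, hρ, hρf, hρadm⟩ := hc.exists_conductorFactors_eq_singleton hP hPf
  have hρm := pow_ne_zero m hρ
  obtain ⟨ε, hεO, γ, δ, hγ, hδ, heq⟩ := hc.exists_units_mul_mem_of_conductorFactors_eq hgen haO ha0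
    hρm (by rw [ha, conductorFactors_pow, hρf, Multiset.nsmul_singleton])
  have hassoc : Associated (ε * ρ ^ m) (ρ ^ m) := associated_unit_mul_left _ _ ε.isUnit
  have hερ : ε * ρ ^ m ≠ 0 := hassoc.ne_zero_iff.mpr hρm
  obtain ⟨s, ⟨u, huO, hu, hsu⟩, hsO, hsρ⟩ := hc.exists_lift hεO hερ
    (s := Multiset.replicate m ρ) (fun y hy => Multiset.eq_of_mem_replicate hy ▸ hρ)
    (by rw [Multiset.prod_replicate]; exact hc.rel_of_associated hassoc)
  have hs0 : ∀ w ∈ s, w ≠ 0 := fun w hw h0 =>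
    hερ (by rw [← hsu, Multiset.prod_eq_zero (h0 ▸ hw), zero_mul])
  refine ⟨s, fun w hw => ⟨hsO w hw, hs0 w hw, hρadm w (hs0 w hw) ?_ fun Q hQ => ?_⟩, δ, u * γ, hδ,
    ⟨O.mul_mem huO hγ.1, mul_ne_zero hu.ne_zero hγ.2.1, ?_⟩, by rw [heq, ← hsu, mul_assoc]⟩
  · obtain ⟨y, hy, hwy⟩ := Multiset.exists_mem_of_rel_of_mem hsρ hw
    exact Multiset.eq_of_mem_replicate hy ▸ hwy
  · have hQ' : Q ∈ idealFactors (ε * ρ ^ m) := by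
      rw [← hsu, idealFactors_mul (Multiset.prod_ne_zero fun h0 => hs0 0 h0 rfl) hu.ne_zero,
        idealFactors_of_isUnit hu, add_zero, idealFactors_multiset_prod hs0]
      exact Multiset.mem_of_le (Multiset.le_sum_of_mem (Multiset.mem_map_of_mem _ hw)) hQ
    rw [idealFactors_eq_of_associated hassoc, idealFactors_pow] at hQ'
    exact Multiset.mem_of_mem_nsmul hQ'
  · rw [Ideal.span_singleton_mul_left_unit hu]
    exact hγ.2.2

end IsTransferOrder

end AdmissibleValuations

section Separation

variable {R : Type*} [CommRing R] [IsDedekindDomain R] {O : Subring R} {c : Con R} {P : Ideal R}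

lemma idealVal_eq_of_sub_mem_pow (hP : Prime P) {a b : R} (ha : a ≠ 0)
    (h : b - a ∈ P ^ (idealVal P a + 1)) : b ≠ 0 ∧ idealVal P b = idealVal P a := by
  have hmem : a ∈ P ^ idealVal P a := (mem_pow_iff_le_idealVal hP ha).mpr le_rfl
  have hnot : a ∉ P ^ (idealVal P a + 1) := fun h1 =>
    absurd ((mem_pow_iff_le_idealVal hP ha).mp h1) (Nat.not_succ_le_self _)
  have hb : b ∉ P ^ (idealVal P a + 1) := fun hb => hnot (by simpa using sub_mem hb h)
  have hb0 : b ≠ 0 := fun h0 => hb (h0 ▸ zero_mem _)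
  refine ⟨hb0, le_antisymm (Nat.lt_succ_iff.mp (not_le.mp ?_)) ?_⟩
  · rwa [← mem_pow_iff_le_idealVal hP hb0]
  · rw [← mem_pow_iff_le_idealVal hP hb0]
    simpa using add_mem (Ideal.pow_le_pow_right (Nat.le_succ _) h) hmem

lemma exists_mem_mul_eq_mul_of_mem_pow (hP : Prime P) {a i : R} {k : ℕ} (ha : a ≠ 0)
    (hi : i ∈ P ^ (idealVal P a + k)) : ∃ s ∉ P, ∃ b ∈ P ^ k, s * i = a * b := by
  obtain ⟨B, hB⟩ := Ideal.dvd_span_singleton.mpr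
    ((mem_pow_iff_le_idealVal hP ha (j := idealVal P a)).mpr le_rfl)
  have hBP : ¬ B ≤ P := fun hle => by
    obtain ⟨C, rfl⟩ := Ideal.dvd_iff_le.mpr hle
    have : a ∈ P ^ (idealVal P a + 1) := by
      rw [← Ideal.dvd_span_singleton, hB, pow_succ]
      exact mul_dvd_mul_left _ (dvd_mul_right P C)
    exact absurd ((mem_pow_iff_le_idealVal hP ha).mp this) (Nat.not_succ_le_self _)
  obtain ⟨s, hsB, hsP⟩ := SetLike.not_le_iff_exists.mp hBP
  have hsi : s * i ∈ Ideal.span {a} * P ^ k := by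
    rw [hB, mul_right_comm, ← pow_add, mul_comm s]
    exact Ideal.mul_mem_mul hi hsB
  obtain ⟨b, hb, hab⟩ := Ideal.mem_span_singleton_mul.mp hsi
  exact ⟨s, hsP, b, hb, hab.symm⟩

namespace IsTransferOrder

-- Here `k` is the exponent of `P` in the conductor, and `e` is an approximate idempotent that is
-- `1` at `P` and `0` at the other primes dividing the conductor.
lemma exists_separating_element (hc : IsTransferOrder O c) (hP : Prime P) :
    ∃ k : ℕ, ∀ N : ℕ, ∃ e ∈ O, 1 - e ∈ P ^ N ∧ (∀ b ∈ P ^ k, b * e ∈ O.conductor) ∧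
      ∀ Q, Prime Q → O.conductor ≤ Q → Q ≠ P → e ∈ Q := by
  have hPp := Ideal.isPrime_of_prime hP
  obtain ⟨k, g, hg, hf⟩ := WfDvdMonoid.max_power_factor hc.conductor_ne_bot hP.irreducible
  rw [Ideal.dvd_iff_le, ← isCoprime_iff_not_le_of_prime hP] at hg
  refine ⟨k, fun N => ?_⟩
  obtain ⟨i, hi, e, he, hie⟩ := Ideal.isCoprime_iff_exists.mp (hg.pow_left (m := N + k))
  obtain rfl : i = 1 - e := eq_sub_of_add_eq hie
  have hk : ∀ b ∈ P ^ k, b * e ∈ O.conductor := fun b hb => hf ▸ Ideal.mul_mem_mul hb he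
  refine ⟨e, hc.mem_of_isIdempotent ?_, Ideal.pow_le_pow_right (Nat.le_add_right N k) hi, hk,
    fun Q hQ hfQ hQP => ?_⟩
  · have := neg_mem (hk _ (Ideal.pow_le_pow_right (Nat.le_add_left k N) hi))
    rwa [show -((1 - e) * e) = e * e - e by ring] at this
  · rw [hf, (Ideal.isPrime_of_prime hQ).mul_le] at hfQ
    refine hfQ.resolve_left (fun h => hQP ?_) he
    exact ((hPp.isMaximal hP.ne_zero).eq_of_le (Ideal.isPrime_of_prime hQ).ne_top
      ((Ideal.isPrime_of_prime hQ).le_of_pow_le h)).symm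

end IsTransferOrder

lemma conductorFactors_mul_add_one_sub (hP : Prime P) (hPf : O.conductor ≤ P) {a e : R}
    (ha : a ≠ 0) (he : 1 - e ∈ P ^ (idealVal P a + 1))
    (heQ : ∀ Q, Prime Q → O.conductor ≤ Q → Q ≠ P → e ∈ Q) :
    a * e + (1 - e) ≠ 0 ∧
      conductorFactors O (a * e + (1 - e)) = Multiset.replicate (idealVal P a) P := by
  obtain ⟨h0, hval⟩ := idealVal_eq_of_sub_mem_pow hP ha (b := a * e + (1 - e)) (by
    rw [show a * e + (1 - e) - a = (1 - a) * (1 - e) by ring]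
    exact Ideal.mul_mem_left _ _ he)
  refine ⟨h0, hval ▸ conductorFactors_eq_replicate_idealVal hPf fun Q hQ hfQ => ?_⟩
  by_contra hQP
  obtain ⟨hQ, hmem⟩ := (mem_idealFactors_iff h0).mp hQ
  refine (Ideal.isPrime_of_prime hQ).ne_top ((Ideal.eq_top_iff_one Q).mpr ?_)
  have := sub_mem hmem (Ideal.mul_mem_left Q (a - 1) (heQ Q hQ hfQ hQP))
  rwa [show a * e + (1 - e) - (a - 1) * e = 1 by ring] at this

namespace IsTransferOrder

lemma exists_mem_conductorFactors_eq_singleton (hc : IsTransferOrder O c)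
    (hgen : HasRegularGenerators O) (hP : Prime P) (hPf : O.conductor ≤ P) :
    ∃ w ∈ O, w ≠ 0 ∧ conductorFactors O w = {P} := by
  obtain ⟨k, hk⟩ := hc.exists_separating_element hP
  obtain ⟨a, haP, haP'⟩ := SetLike.exists_of_lt (Ideal.pow_right_strictAnti P hP.ne_zero
    (Ideal.isPrime_of_prime hP).ne_top (Nat.lt_succ_self (2 * k + 1)))
  have ha : a ≠ 0 := fun h0 => haP' (h0 ▸ zero_mem _)
  have haval : idealVal P a = 2 * k + 1 := by
    rw [mem_pow_iff_le_idealVal hP ha] at haP haP'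
    omega
  obtain ⟨e, heO, he, hek, heQ⟩ := hk (idealVal P a + 1)
  have hyO : a * e + (1 - e) ∈ O := O.add_mem
    (mem_of_mem_conductor (hek a (Ideal.pow_le_pow_right (by omega) haP)))
    (O.sub_mem O.one_mem heO)
  obtain ⟨hy0, hyf⟩ := conductorFactors_mul_add_one_sub hP hPf ha he heQ
  obtain ⟨s, hs, x, z, hx, hz, hxz⟩ := hc.exists_admissible_factorization hgen hP hPf hyO hy0 hyf
  have hs0 : ∀ w ∈ s, w ≠ 0 := fun w hw => (hs w hw).2.1
  have hsum : (s.map (conductorFactors O)).sum = Multiset.replicate (2 * k + 1) P := by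
    rw [← haval, ← hyf, ← conductorFactors_multiset_prod O hs0]
    have := congrArg (conductorFactors O) hxz
    rwa [conductorFactors_mul O hy0 hx.2.1,
      conductorFactors_mul O (Multiset.prod_ne_zero fun h => hs0 0 h rfl) hz.2.1,
      hx.conductorFactors_eq_zero, hz.conductorFactors_eq_zero, add_zero, add_zero, eq_comm] at this
  by_contra! hno
  have heven : 2 ∣ (s.map (conductorFactors O)).sum.card := by
    rw [← Multiset.cardHom_apply, map_multiset_sum, Multiset.map_map]
    refine Multiset.dvd_sum fun n hn => ?_
    obtain ⟨w, hw, rfl⟩ := Multiset.mem_map.mp hn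
    obtain ⟨hwO, hw0, j, hj, hjf⟩ := hs w hw
    rw [Function.comp_apply, hjf, Multiset.cardHom_apply, Multiset.card_replicate,
      ← even_iff_two_dvd, ← Nat.not_odd_iff_even]
    exact fun hodd => hno w hwO hw0 (by rw [hjf, hj.eq_one_of_odd hodd, Multiset.replicate_one])
  rw [hsum, Multiset.card_replicate] at heven
  omega

lemma exists_conductorFactors_eq (hc : IsTransferOrder O c) (hgen : HasRegularGenerators O)
    {m : Multiset (Ideal R)} (hm : ∀ Q ∈ m, Prime Q ∧ O.conductor ≤ Q) :
    ∃ a ∈ O, a ≠ 0 ∧ conductorFactors O a = m := by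
  induction m using Multiset.induction_on with
  | empty => exact ⟨1, O.one_mem, one_ne_zero, conductorFactors_of_isUnit O isUnit_one⟩
  | cons Q m ih =>
    rw [Multiset.forall_mem_cons] at hm
    obtain ⟨a, haO, ha, rfl⟩ := ih hm.2
    obtain ⟨w, hwO, hw, hwf⟩ := hc.exists_mem_conductorFactors_eq_singleton hgen hm.1.1 hm.1.2
    exact ⟨w * a, O.mul_mem hwO haO, mul_ne_zero hw ha, by
      rw [conductorFactors_mul O hw ha, hwf, Multiset.singleton_add]⟩

lemma exists_units_mul_mem_subring (hc : IsTransferOrder O c) (hgen : HasRegularGenerators O)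
    (x : R) : ∃ ε : Rˣ, ε * x ∈ O := by
  classical
  obtain rfl | hx := eq_or_ne x 0
  · exact ⟨1, by rw [mul_zero]; exact O.zero_mem⟩
  obtain ⟨a, haO, ha, hax⟩ := hc.exists_conductorFactors_eq hgen (m := conductorFactors O x)
    fun Q hQ => ⟨prime_of_mem_idealFactors (Multiset.mem_of_mem_filter hQ),
      Multiset.of_mem_filter hQ⟩
  obtain ⟨ε, hε, -⟩ := hc.exists_units_mul_mem_of_conductorFactors_eq hgen haO ha hx hax
  exact ⟨ε, hε⟩

lemma exists_mem_conductor_mul_eq (hc : IsTransferOrder O c) (hP : Prime P) {b s e : R}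
    (hs : s ∉ P) (he : e ∉ P) (hbe : b * e ∈ O.conductor) :
    ∃ s' ∈ O, s' ∉ P ∧ ∃ b' ∈ O.conductor, s * b' = b * s' := by
  obtain ⟨t, ht, hpow⟩ := hc.isUniformRootExtension
  obtain ⟨r, rfl⟩ := Nat.exists_eq_add_of_le' ht
  have hPp := Ideal.isPrime_of_prime hP
  refine ⟨(s * e) ^ (r + 1), hpow _, fun h => ?_, b * e * (s * e) ^ r,
    Ideal.mul_mem_right _ _ hbe, by ring⟩
  exact (hPp.mem_or_mem (hPp.mem_of_pow_mem _ h)).elim hs he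

lemma exists_conductorFactors_eq_replicate (hc : IsTransferOrder O c) (hP : Prime P)
    (hPf : O.conductor ≤ P) {a : R} (haO : a ∈ O) (ha : a ≠ 0) :
    ∃ a' ∈ O, a' ≠ 0 ∧ conductorFactors O a' = Multiset.replicate (idealVal P a) P ∧
      ∃ x ∈ O, ∃ y ∈ O, x ∉ P ∧ y ∉ P ∧ a * x = a' * y := by
  have hPp := Ideal.isPrime_of_prime hP
  obtain ⟨k, hk⟩ := hc.exists_separating_element hP
  obtain ⟨e, heO, he, hek, heQ⟩ := hk (idealVal P a + (k + 1))
  obtain ⟨h0, hf⟩ := conductorFactors_mul_add_one_sub hP hPf ha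
    (Ideal.pow_le_pow_right (by omega) he) heQ
  have heP : e ∉ P := fun h => hPp.ne_top ((Ideal.eq_top_iff_one P).mpr (by
    simpa using add_mem (Ideal.pow_le_self (by omega) he) h))
  obtain ⟨s, hs, b, hb, hsb⟩ := exists_mem_mul_eq_mul_of_mem_pow hP ha
    (Ideal.pow_le_pow_right (by omega) he : 1 - e ∈ P ^ (idealVal P a + k))
  obtain ⟨s', hs'O, hs', b', hb', hbs⟩ := hc.exists_mem_conductor_mul_eq hP hs heP (hek b hb)
  have hab' : a * b' = (1 - e) * s' := by
    refine mul_left_cancel₀ (fun h0 => hs (h0 ▸ zero_mem P) : s ≠ 0) ?_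
    linear_combination a * hbs - s' * hsb
  refine ⟨_, O.add_mem (O.mul_mem haO heO) (O.sub_mem O.one_mem heO), h0, hf, e * s' + b',
    O.add_mem (O.mul_mem heO hs'O) (mem_of_mem_conductor hb'), s', hs'O, fun h => ?_, hs', ?_⟩
  · have := sub_mem h (hPf hb')
    rw [add_sub_cancel_right] at this
    exact (hPp.mem_or_mem this).elim heP hs'
  · linear_combination hab'

end IsTransferOrder

end Separation

section LocalAtoms

variable {R : Type*} [CommRing R] {O : Subring R} {P : Ideal R} [hq : (P.comap O.subtype).IsPrime]

local notation "φ" => algebraMap O (Localization.AtPrime (P.comap O.subtype))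

lemma isUnit_algebraMap_iff_notMem (a : O) : IsUnit (φ a) ↔ (a : R) ∉ P :=
  IsLocalization.AtPrime.isUnit_to_map_iff _ (P.comap O.subtype) a

lemma associated_algebraMap_of_mul_eq_mul {a b x y : O} (hx : (x : R) ∉ P) (hy : (y : R) ∉ P)
    (h : a * x = b * y) : Associated (φ a) (φ b) := by
  rw [← isUnit_algebraMap_iff_notMem] at hx hy
  have := congrArg φ h
  rw [map_mul, map_mul] at this
  exact (associated_mul_unit_left _ _ hx).symm.trans (this ▸ associated_mul_unit_left _ _ hy)

lemma exists_associated_algebraMap (x : Localization.AtPrime (P.comap O.subtype)) :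
    ∃ a : O, Associated (φ a) x := by
  obtain ⟨a, s, rfl⟩ := IsLocalization.exists_mk'_eq (P.comap O.subtype).primeCompl x
  refine ⟨a, ?_⟩
  rw [← IsLocalization.mk'_spec (Localization.AtPrime (P.comap O.subtype)) a s]
  exact associated_mul_unit_left _ _ (IsLocalization.map_units _ s)

lemma IsLocalAtom.ne_zero {a : O} (ha : IsLocalAtom O P hq a) : (a : R) ≠ 0 := fun h0 =>
  Irreducible.ne_zero ha (by rw [(Subtype.ext h0 : a = 0), map_zero])

lemma exists_mul_eq_mul_of_associated_algebraMap [IsDomain R] {a b : O}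
    (h : Associated (φ a) (φ b)) :
    ∃ x y : O, (x : R) ∉ P ∧ (y : R) ∉ P ∧ a * x = b * y := by
  obtain ⟨u, hu⟩ := h
  obtain ⟨x, s, hxs⟩ := IsLocalization.exists_mk'_eq (P.comap O.subtype).primeCompl u.val
  refine ⟨x, s, (IsLocalization.AtPrime.isUnit_mk'_iff _ (P.comap O.subtype) x s).mp
    (hxs ▸ u.isUnit), s.2, ?_⟩
  refine IsLocalization.injective (Localization.AtPrime (P.comap O.subtype))
    (P.comap O.subtype).primeCompl_le_nonZeroDivisors ?_
  rw [map_mul, map_mul, ← hu, ← hxs, mul_assoc, IsLocalization.mk'_spec]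

variable [IsDedekindDomain R]

lemma idealVal_eq_of_associated_algebraMap (hP : Prime P) {a b : O} (ha : (a : R) ≠ 0)
    (h : Associated (φ a) (φ b)) : idealVal P (a : R) = idealVal P (b : R) := by
  obtain ⟨x, y, hx, hy, hxy⟩ := exists_mul_eq_mul_of_associated_algebraMap h
  have hx0 : (x : R) ≠ 0 := fun h0 => hx (h0 ▸ zero_mem P)
  have hy0 : (y : R) ≠ 0 := fun h0 => hy (h0 ▸ zero_mem P)
  have hval : (a * x : R) = b * y := congrArg Subtype.val hxy
  have hb : (b : R) ≠ 0 := left_ne_zero_of_mul (hval ▸ mul_ne_zero ha hx0)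
  have := congrArg (idealVal P) hval
  rwa [idealVal_mul P ha hx0, idealVal_mul P hb hy0, (idealVal_eq_zero_iff hP hx0).mpr hx,
    (idealVal_eq_zero_iff hP hy0).mpr hy, add_zero, add_zero] at this

lemma isLocalAtom_of_idealVal_eq_one (hP : Prime P) {w : O} (hw0 : (w : R) ≠ 0)
    (hw : idealVal P (w : R) = 1) : IsLocalAtom O P hq w := by
  have hunit {a : O} (ha : (a : R) ≠ 0) : IsUnit (φ a) ↔ idealVal P (a : R) = 0 := by
    rw [isUnit_algebraMap_iff_notMem, idealVal_eq_zero_iff hP ha]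
  refine ⟨by simp [hunit hw0, hw], fun x y hxy => ?_⟩
  obtain ⟨a, ha⟩ := exists_associated_algebraMap x
  obtain ⟨b, hb⟩ := exists_associated_algebraMap y
  have hwab : Associated (φ w) (φ (a * b)) := by
    rw [hxy, map_mul]
    exact (ha.mul_mul hb).symm
  have hab : ((a * b : O) : R) ≠ 0 := by
    obtain ⟨s, t, hs, -, hst⟩ := exists_mul_eq_mul_of_associated_algebraMap hwab
    have hs0 : (s : R) ≠ 0 := fun h0 => hs (h0 ▸ zero_mem P)
    have hval : (w * s : R) = (a * b : O) * t := congrArg Subtype.val hst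
    exact left_ne_zero_of_mul (hval ▸ mul_ne_zero hw0 hs0)
  have hval := idealVal_eq_of_associated_algebraMap hP hw0 hwab
  rw [Subring.coe_mul] at hab hval
  rw [idealVal_mul P (left_ne_zero_of_mul hab) (right_ne_zero_of_mul hab), hw] at hval
  rw [← ha.isUnit_iff, ← hb.isUnit_iff, hunit (left_ne_zero_of_mul hab),
    hunit (right_ne_zero_of_mul hab)]
  omega

end LocalAtoms

lemma exists_mem_associated_of_irreducible_multiset_prod {M : Type*} [CommMonoid M]
    {s : Multiset M} (hs : Irreducible s.prod) : ∃ x ∈ s, Associated s.prod x := by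
  induction s using Multiset.induction_on with
  | empty => exact absurd (Multiset.prod_zero (M := M) ▸ hs) not_irreducible_one
  | cons x s ih =>
    rw [Multiset.prod_cons] at hs ⊢
    obtain hx | hs' := hs.isUnit_or_isUnit rfl
    · obtain ⟨y, hy, hsy⟩ := ih ((irreducible_isUnit_mul hx).mp hs)
      exact ⟨y, Multiset.mem_cons_of_mem hy, (associated_unit_mul_left _ _ hx).trans hsy⟩
    · exact ⟨x, Multiset.mem_cons_self x s, associated_mul_unit_left _ _ hs'⟩

namespace IsTransferOrder

variable {R : Type*} [CommRing R] [IsDedekindDomain R] {O : Subring R} {c : Con R} {P : Ideal R}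
  [hq : (P.comap O.subtype).IsPrime]

lemma isAdmissibleVal_of_isLocalAtom (hc : IsTransferOrder O c) (hgen : HasRegularGenerators O)
    (hP : Prime P) (hPf : O.conductor ≤ P) {a : O} (ha : IsLocalAtom O P hq a) :
    IsAdmissibleVal P (idealVal P (a : R)) := by
  classical
  have hnotMem {x : R} (hx : IsRegularElement O x) : x ∉ P := by
    rw [← idealVal_eq_zero_iff hP hx.2.1, idealVal_eq_count_conductorFactors hPf,
      hx.conductorFactors_eq_zero, Multiset.count_zero]
  obtain ⟨a', ha'O, ha', hf, u, huO, v, hvO, hu, hv, huv⟩ :=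
    hc.exists_conductorFactors_eq_replicate hP hPf a.2 ha.ne_zero
  obtain ⟨s, hs, x, y, hx, hy, hxy⟩ := hc.exists_admissible_factorization hgen hP hPf ha'O ha' hf
  lift s to Multiset O using fun w hw => (hs w hw).1
  have haa' : Associated (algebraMap O (Localization.AtPrime (P.comap O.subtype)) a)
      (algebraMap O (Localization.AtPrime (P.comap O.subtype)) ⟨a', ha'O⟩) :=
    associated_algebraMap_of_mul_eq_mul (x := ⟨u, huO⟩) (y := ⟨v, hvO⟩) hu hv (Subtype.ext huv)
  have has := haa'.trans (associated_algebraMap_of_mul_eq_mul (b := s.prod) (x := ⟨x, hx.1⟩)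
    (y := ⟨y, hy.1⟩) (hnotMem hx) (hnotMem hy)
    (Subtype.ext (hxy.trans (congrArg (· * y) (map_multiset_prod O.subtype s).symm))))
  rw [map_multiset_prod] at has
  obtain ⟨φw, hφw, hasw⟩ :=
    exists_mem_associated_of_irreducible_multiset_prod (has.irreducible_iff.mp ha)
  obtain ⟨w, hw, rfl⟩ := Multiset.mem_map.mp hφw
  obtain ⟨-, -, j, hj, hjf⟩ := hs w (Multiset.mem_map_of_mem _ hw)
  rw [idealVal_eq_of_associated_algebraMap hP ha.ne_zero (has.trans hasw),
    idealVal_eq_count_conductorFactors hPf, hjf, Multiset.count_replicate_self]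
  exact hj

end IsTransferOrder

section Fibers

open UniqueFactorizationMonoid

variable {R : Type*} [CommRing R] {O : Subring R} {p : Ideal O}

/-- The prime ideals of `R` containing `x` are exactly those lying over the ideal `p` of `O`. -/
def CutsOutFiber (p : Ideal O) (x : R) : Prop :=
  ∀ Q : Ideal R, Q.IsPrime → (x ∈ Q ↔ Q.comap O.subtype = p)

namespace CutsOutFiber

lemma of_span_eq_map_pow [hp : p.IsMaximal] {k : ℕ} (hk : k ≠ 0) {x : R}
    (hx : Ideal.span {x} = p.map O.subtype ^ k) : CutsOutFiber p x := fun Q hQ => by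
  rw [← Ideal.span_singleton_le_iff_mem, hx, hQ.pow_le_iff hk, Ideal.map_le_iff_le_comap]
  exact ⟨fun h => (hp.eq_of_le (hQ.comap O.subtype).ne_top h).symm, fun h => h.ge⟩

lemma mul {x y : R} (hx : CutsOutFiber p x)
    (hy : ∀ Q : Ideal R, Q.IsPrime → y ∈ Q → Q.comap O.subtype = p) : CutsOutFiber p (x * y) :=
  fun Q hQ => ⟨fun h => (hQ.mem_or_mem h).elim (hx Q hQ).mp (hy Q hQ),
    fun h => Q.mul_mem_right y ((hx Q hQ).mpr h)⟩

lemma pow {x : R} (hx : CutsOutFiber p x) {t : ℕ} (ht : 0 < t) : CutsOutFiber p (x ^ t) :=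
  fun Q hQ => by rw [hQ.pow_mem_iff_mem t ht, hx Q hQ]

lemma mem_of_dvd {x w : R} (hx : CutsOutFiber p x) (hwO : w ∈ O) (hw : ¬ IsUnit w) (hwx : w ∣ x)
    {A : Ideal R} (hA : A.comap O.subtype = p) : w ∈ A := by
  obtain ⟨Q, hQ, hwQ⟩ := exists_max_ideal_of_mem_nonunits hw
  have hQp : Q.comap O.subtype = p := (hx Q hQ.isPrime).mp (Q.mem_of_dvd hwx hwQ)
  have hmem : (⟨w, hwO⟩ : O) ∈ Q.comap O.subtype := hwQ
  rwa [hQp, ← hA] at hmem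

end CutsOutFiber

-- Each of the `k` factors lifting the factors `π` is a nonunit of `O` dividing an element that
-- cuts out the fiber of `A`, hence lies in `A`.
lemma IsTransferCon.mul_pow_mem_pow [IsDomain R] {c : Con R} (hc : IsTransferCon O c) {x π : R}
    {k : ℕ} (hx : x ≠ 0) (hπ : π ≠ 0) (hmem : x * π ^ k ∈ O)
    (hfiber : CutsOutFiber p (x * π ^ k)) (hπ1 : ¬ c π 1) {A : Ideal R}
    (hA : A.comap O.subtype = p) : x * π ^ k ∈ A ^ k := by
  have hy0 : x * π ^ k ≠ 0 := mul_ne_zero hx (pow_ne_zero k hπ)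
  obtain ⟨w, -, v, hvO, hwv, -, hvπ⟩ := hc.exists_eq_mul hmem hy0 hx (pow_ne_zero k hπ) (c.refl _)
  obtain ⟨m, ⟨u, -, -, rfl⟩, hmO, hmπ⟩ := hc.exists_lift (s := Multiset.replicate k π)
    hvO (right_ne_zero_of_mul (hwv ▸ hy0)) (fun y hy => Multiset.eq_of_mem_replicate hy ▸ hπ)
    (by rwa [Multiset.prod_replicate])
  obtain ⟨rfl, hmc⟩ := Multiset.rel_replicate_right.mp hmπ
  have hdvd : m.prod ∣ x * π ^ m.card := hwv ▸ dvd_mul_of_dvd_right (dvd_mul_right _ _) _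
  refine (A ^ m.card).mem_of_dvd hdvd ?_
  rw [← Ideal.span_singleton_le_iff_mem, ← Ideal.multiset_prod_span_singleton,
    ← Multiset.card_map (fun z : R => Ideal.span {z}) m]
  refine Multiset.prod_le_pow_card _ _ fun I hI => ?_
  obtain ⟨z, hz, rfl⟩ := Multiset.mem_map.mp hI
  rw [Ideal.span_singleton_le_iff_mem]
  refine hfiber.mem_of_dvd (hmO z hz) (fun hu => hπ1 ?_) ((Multiset.dvd_prod hz).trans hdvd) hA
  exact c.trans (c.symm (hmc z hz)) (hc.rel_of_associated (associated_one_iff_isUnit.mpr hu))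

lemma exists_span_eq_multiset_prod_pow_of_rel_one {c : Con R} {m : Multiset (Ideal R)}
    (hm : ∀ Q ∈ m, ∃ n : ℕ, 0 < n ∧ ∃ y : R, Ideal.span {y} = Q ^ n ∧ c y 1) :
    ∃ n : ℕ, 0 < n ∧ ∃ y : R, Ideal.span {y} = m.prod ^ n ∧ c y 1 := by
  induction m using Multiset.induction_on with
  | empty => exact ⟨1, one_pos, 1, by rw [Ideal.span_singleton_one, Multiset.prod_zero, one_pow,
      Ideal.one_eq_top], c.refl 1⟩
  | cons Q m ih =>
    rw [Multiset.forall_mem_cons] at hm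
    obtain ⟨⟨n, hn, y, hy, hy1⟩, hm⟩ := hm
    obtain ⟨n', hn', y', hy', hy'1⟩ := ih hm
    refine ⟨n * n', Nat.mul_pos hn hn', y ^ n' * y' ^ n, ?_, ?_⟩
    · rw [← Ideal.span_singleton_mul_span_singleton, ← Ideal.span_singleton_pow,
        ← Ideal.span_singleton_pow, hy, hy', ← pow_mul, ← pow_mul, mul_comm n' n, ← mul_pow,
        Multiset.prod_cons]
    · simpa only [one_pow, mul_one] using c.mul (c.pow n' hy1) (c.pow n hy'1)

variable [Algebra.IsIntegral O R]

-- If the contractions of `eR + f` and `(1 - e)R + f` were not comaximal in `O`, then some prime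
-- over a common maximal ideal would contain both `e` and `1 - e`.
lemma exists_sub_mem_conductor {e : R}
    (h : ∀ Q Q' : Ideal R, Q.IsPrime → Q'.IsPrime → O.conductor ≤ Q → O.conductor ≤ Q' →
      Q.comap O.subtype = Q'.comap O.subtype → e ∈ Q → e ∈ Q')
    (he : e * e - e ∈ O.conductor) : ∃ u ∈ O, e - u ∈ O.conductor := by
  have htop : (Ideal.span {e} ⊔ O.conductor).comap O.subtype ⊔
      (Ideal.span {1 - e} ⊔ O.conductor).comap O.subtype = ⊤ := by
    by_contra hne
    obtain ⟨m, hm, hle⟩ := Ideal.exists_le_maximal _ hne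
    have := hm.isPrime
    obtain ⟨Q, hQ, hQp, hQm⟩ := Ideal.exists_ideal_over_prime_of_isIntegral m
      (Ideal.span {e} ⊔ O.conductor) (le_sup_left.trans hle)
    obtain ⟨Q', hQ', hQ'p, hQ'm⟩ := Ideal.exists_ideal_over_prime_of_isIntegral m
      (Ideal.span {1 - e} ⊔ O.conductor) (le_sup_right.trans hle)
    have heQ' : e ∈ Q' := h Q Q' hQp hQ'p (le_sup_right.trans hQ) (le_sup_right.trans hQ')
      (hQm.trans hQ'm.symm) (hQ (Ideal.mem_sup_left (Ideal.mem_span_singleton_self e)))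
    have heQ'_compl : 1 - e ∈ Q' :=
      hQ' (Ideal.mem_sup_left (Ideal.mem_span_singleton_self (1 - e)))
    exact hQ'p.one_notMem (by simpa only [add_sub_cancel] using Q'.add_mem heQ' heQ'_compl)
  obtain ⟨u, hu, v, hv, huv⟩ := Submodule.mem_sup.mp ((Ideal.eq_top_iff_one _).mp htop)
  obtain ⟨x, a, ha, hxa⟩ := Ideal.mem_span_singleton_sup.mp (Ideal.mem_comap.mp hu)
  obtain ⟨y, b, hb, hyb⟩ := Ideal.mem_span_singleton_sup.mp (Ideal.mem_comap.mp hv)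
  rw [Subring.subtype_apply] at hxa hyb
  have huv' : (u : R) + v = 1 := congrArg Subtype.val huv
  have heq : e - u = (e * e - e) * (x - y) + (e * b - (1 - e) * a) := by
    linear_combination -e * huv' + (1 - e) * hxa - e * hyb
  refine ⟨u, u.2, heq ▸ O.conductor.add_mem (O.conductor.mul_mem_right _ he) ?_⟩
  exact O.conductor.sub_mem (O.conductor.mul_mem_left _ hb) (O.conductor.mul_mem_left _ ha)

lemma mem_of_mul_self_sub_mem_conductor {e : R}
    (h : ∀ Q Q' : Ideal R, Q.IsPrime → Q'.IsPrime → O.conductor ≤ Q → O.conductor ≤ Q' →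
      Q.comap O.subtype = Q'.comap O.subtype → e ∈ Q → e ∈ Q')
    (he : e * e - e ∈ O.conductor) : e ∈ O := by
  obtain ⟨u, hu, heu⟩ := exists_sub_mem_conductor h he
  simpa only [sub_add_cancel] using O.add_mem (mem_of_mem_conductor heu) hu

lemma CutsOutFiber.exists_pow_mem [Finite (R ⧸ O.conductor)] {x : R} (hx : CutsOutFiber p x) :
    ∃ t : ℕ, 0 < t ∧ x ^ t ∈ O := by
  obtain ⟨t, ht, hidem⟩ := exists_isIdempotentElem_pow (Ideal.Quotient.mk O.conductor x)
  refine ⟨t, ht, mem_of_mul_self_sub_mem_conductor (fun Q Q' hQ hQ' _ _ hQQ' h => ?_) ?_⟩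
  · rw [hQ.pow_mem_iff_mem t ht, hx Q hQ] at h
    rwa [hQ'.pow_mem_iff_mem t ht, hx Q' hQ', ← hQQ']
  · rw [← Ideal.Quotient.eq, map_mul, map_pow]
    exact hidem

variable [IsDedekindDomain R] [Finite (R ⧸ O.conductor)] {c : Con R}

lemma IsTransferCon.rel_one_of_span_eq_pow (hc : IsTransferCon O c) {x : R} (hx0 : x ≠ 0)
    (hx : CutsOutFiber p x) {A B : Ideal R} (hA : Prime A) (hB : Prime B) (hAB : A ≠ B)
    (hAp : A.comap O.subtype = p) (hBp : B.comap O.subtype = p) {n : ℕ} (hn : n ≠ 0) {π : R}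
    (hπ : Ideal.span {π} = B ^ n) : c π 1 := by
  by_contra hπ1
  have hπ0 : π ≠ 0 := ne_zero_of_span_singleton_eq (pow_ne_zero n hB.ne_zero) hπ
  have hπQ (Q : Ideal R) (hQ : Q.IsPrime) (h : π ∈ Q) : B = Q := by
    rw [← Ideal.span_singleton_le_iff_mem, hπ, hQ.pow_le_iff hn] at h
    exact ((Ideal.isPrime_of_prime hB).isMaximal hB.ne_zero).eq_of_le hQ.ne_top h
  have hπA : π ∉ A := fun h => hAB (hπQ A (Ideal.isPrime_of_prime hA) h).symm
  have hfiber : CutsOutFiber p (x * π ^ (idealVal A x + 1)) := hx.mul fun Q hQ h =>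
    hπQ Q hQ (hQ.mem_of_pow_mem _ h) ▸ hBp
  obtain ⟨t, ht, hpow⟩ := hfiber.exists_pow_mem
  have hfiber_pow := hfiber.pow ht
  rw [mul_pow, ← pow_mul] at hpow hfiber_pow
  have hmem := hc.mul_pow_mem_pow (pow_ne_zero t hx0) hπ0 hpow hfiber_pow hπ1 hAp
  rw [mem_pow_iff_le_idealVal hA (mul_ne_zero (pow_ne_zero t hx0) (pow_ne_zero _ hπ0)),
    idealVal_mul A (pow_ne_zero t hx0) (pow_ne_zero _ hπ0), idealVal_pow, idealVal_pow,
    (idealVal_eq_zero_iff hA hπ0).mpr hπA] at hmem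
  nlinarith

lemma IsTransferCon.eq_of_comap_eq (hc : IsTransferCon O c)
    (htor : ∀ g : ClassGroup R, ∃ n : ℕ, 0 < n ∧ g ^ n = 1) (hf : O.conductor ≠ ⊥)
    {P Q : Ideal R} (hP : P.IsPrime) (hQ : Q.IsPrime) (hPf : O.conductor ≤ P)
    (hQf : O.conductor ≤ Q) (h : P.comap O.subtype = Q.comap O.subtype) : P = Q := by
  by_contra hPQ
  have hP' : Prime P := Ideal.prime_of_isPrime (ne_bot_of_le_ne_bot hf hPf) hP
  have hQ' : Prime Q := Ideal.prime_of_isPrime (ne_bot_of_le_ne_bot hf hQf) hQ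
  have := hP.isMaximal hP'.ne_zero
  have : (P.comap O.subtype).IsMaximal := Ideal.isMaximal_comap_of_isIntegral_of_isMaximal P
  have hJ : (P.comap O.subtype).map O.subtype ≠ 0 := ne_bot_of_le_ne_bot hf fun y hy =>
    Ideal.mem_map_of_mem O.subtype (x := ⟨y, mem_of_mem_conductor hy⟩) (hPf hy)
  obtain ⟨k, hk, x, hx⟩ := exists_span_eq_pow htor hJ
  have hx0 : x ≠ 0 := ne_zero_of_span_singleton_eq (pow_ne_zero k hJ) hx
  have hxp : CutsOutFiber (P.comap O.subtype) x := .of_span_eq_map_pow hk.ne' hx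
  have hrel (B : Ideal R) (hB : B ∈ normalizedFactors ((P.comap O.subtype).map O.subtype)) :
      ∃ n : ℕ, 0 < n ∧ ∃ π : R, Ideal.span {π} = B ^ n ∧ c π 1 := by
    obtain ⟨hBp, hBJ⟩ := (mem_normalizedFactors_iff hJ).mp hB
    have hBx : x ∈ B := by
      rw [← Ideal.span_singleton_le_iff_mem, hx]
      exact (Ideal.pow_le_self hk.ne').trans (Ideal.le_of_dvd hBJ)
    have hBP := (hxp B (Ideal.isPrime_of_prime hBp)).mp hBx
    obtain ⟨n, hn, π, hπ⟩ := exists_span_eq_pow htor hBp.ne_zero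
    refine ⟨n, hn, π, hπ, ?_⟩
    obtain rfl | hBne := eq_or_ne P B
    · exact hc.rel_one_of_span_eq_pow hx0 hxp hQ' hBp (Ne.symm hPQ) h.symm hBP hn.ne' hπ
    · exact hc.rel_one_of_span_eq_pow hx0 hxp hP' hBp hBne rfl hBP hn.ne' hπ
  obtain ⟨n, hn, y, hy, hy1⟩ := exists_span_eq_multiset_prod_pow_of_rel_one hrel
  rw [associated_iff_eq.mp (prod_normalizedFactors hJ)] at hy
  have hy0 : y ≠ 0 := ne_zero_of_span_singleton_eq (pow_ne_zero n hJ) hy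
  have hyp : CutsOutFiber (P.comap O.subtype) y := .of_span_eq_map_pow hn.ne' hy
  obtain ⟨t, ht, hyO⟩ := hyp.exists_pow_mem
  have hunit : IsUnit (y ^ t) := hc.isUnit_of_mem_of_rel_one hyO (pow_ne_zero t hy0)
    (by simpa only [one_pow] using c.pow t hy1)
  exact hP.ne_top (P.eq_top_of_isUnit_mem (((hyp.pow ht) P hP).mpr rfl) hunit)

end Fibers

-- In the coordinates of a divisor homomorphism, `n * bᵢ ≤ cᵢ + n * aᵢ` for all `n`, so `bᵢ ≤ aᵢ`.
lemma IsKrullMonoid.dvd_of_forall_pow_dvd {M : Type*} [CommMonoid M] (hM : IsKrullMonoid M)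
    {a b c : M} (h : ∀ n : ℕ, b ^ n ∣ c * a ^ n) : b ∣ a := by
  obtain ⟨ι, d, hd⟩ := hM
  have hle (i : ι) : (d b).toAdd i ≤ (d a).toAdd i := by
    obtain ⟨x, hx⟩ := h ((d c).toAdd i + 1)
    have hi := congrArg (fun y => (d y).toAdd i) hx
    simp only [map_mul, map_pow, toAdd_mul, toAdd_pow, Finsupp.add_apply, Finsupp.smul_apply,
      smul_eq_mul] at hi
    nlinarith
  exact hd b a ⟨.ofAdd ((d a).toAdd - (d b).toAdd),
    Multiplicative.toAdd.injective (add_tsub_cancel_of_le hle).symm⟩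

/-- The congruence "`x` and `y` are associated within the submonoid `H`" on `K`. -/
def assocCon {K : Type*} [CommRing K] (H : Submonoid K) : Con K where
  r := AssocIn H
  iseqv :=
    { refl := fun x => ⟨1, H.one_mem, ⟨1, H.one_mem, one_mul 1⟩, (mul_one x).symm⟩
      symm := by
        rintro x y ⟨e, he, ⟨e', he', hee'⟩, rfl⟩
        exact ⟨e', he', ⟨e, he, by rw [mul_comm, hee']⟩, by rw [mul_assoc, hee', mul_one]⟩
      trans := by
        rintro x y z ⟨e, he, ⟨e', he', hee'⟩, rfl⟩ ⟨g, hg, ⟨g', hg', hgg'⟩, rfl⟩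
        exact ⟨g * e, H.mul_mem hg he, ⟨g' * e', H.mul_mem hg' he',
          by rw [mul_mul_mul_comm, hgg', hee', one_mul]⟩, mul_assoc z g e⟩ }
  mul' := by
    rintro w x y z ⟨e, he, ⟨e', he', hee'⟩, rfl⟩ ⟨g, hg, ⟨g', hg', hgg'⟩, rfl⟩
    exact ⟨e * g, H.mul_mem he hg, ⟨e' * g', H.mul_mem he' hg',
      by rw [mul_mul_mul_comm, hee', hgg', one_mul]⟩, mul_mul_mul_comm x e z g⟩

section Overmonoid

variable {R : Type*} [CommRing R]

/-- The congruence "`x` and `y` are associated within the submonoid `H` of the fraction field"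
on `R`. -/
def overmonoidCon (H : Submonoid (FractionRing R)) : Con R :=
  (assocCon H).comap (algebraMap R (FractionRing R)) (map_mul _)

lemma conductor_ne_bot [IsDomain R] {O : Subring R} [Finite (R ⧸ O.conductor)] {P : Ideal R}
    (hP : P ≠ ⊥) (hP' : P ≠ ⊤) : O.conductor ≠ ⊥ := by
  intro hf
  have : Finite R := .of_equiv _
    ((Ideal.quotEquivOfEq hf).trans (RingEquiv.quotientBot R)).toEquiv
  let := (Finite.isField_of_domain R).toField
  exact (Ideal.eq_bot_or_top P).elim hP hP'

namespace IsTKOvermonoid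

variable [IsDedekindDomain R] {O : Subring R} {H : Submonoid (FractionRing R)}

-- For `0 ≠ x` in the conductor, `x * r ^ n ∈ O` for all `n`: so `r` is almost integral over `H`.
lemma algebraMap_mem (hH : IsTKOvermonoid O H) (hf : O.conductor ≠ ⊥) {r : R} (hr : r ≠ 0) :
    algebraMap R (FractionRing R) r ∈ H := by
  obtain ⟨x, hx, hx0⟩ := Submodule.exists_mem_ne_zero_of_ne_bot hf
  let y (n : ℕ) : H :=
    ⟨_, hH.incl (x * r ^ n) (hx (r ^ n)) (mul_ne_zero hx0 (pow_ne_zero n hr))⟩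
  obtain ⟨z, hz⟩ : y 0 ∣ y 1 := hH.krull.dvd_of_forall_pow_dvd (c := y 0) fun n =>
    ⟨y n, Subtype.ext (by
      simp only [y, Submonoid.coe_mul, SubmonoidClass.coe_pow, ← map_pow, ← map_mul]
      congr 1
      ring)⟩
  have hxr : algebraMap R (FractionRing R) x * algebraMap R (FractionRing R) r =
      algebraMap R (FractionRing R) x * z := by
    have := congrArg Subtype.val hz
    simp only [y, Submonoid.coe_mul, pow_zero, pow_one, map_mul, map_one, mul_one] at this
    exact this
  have hx0' : algebraMap R (FractionRing R) x ≠ 0 :=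
    (map_ne_zero_iff _ (IsFractionRing.injective R (FractionRing R))).mpr hx0
  exact mul_left_cancel₀ hx0' hxr ▸ z.2

lemma isTransferCon (hH : IsTKOvermonoid O H) (hf : O.conductor ≠ ⊥) :
    IsTransferCon O (overmonoidCon H) where
  rel_of_associated := by
    rintro x _ ⟨u, rfl⟩
    refine (overmonoidCon H).symm ⟨_, hH.algebraMap_mem hf u.ne_zero,
      ⟨_, hH.algebraMap_mem hf u⁻¹.ne_zero, ?_⟩, map_mul _ x u⟩
    rw [← map_mul, Units.mul_inv, map_one]
  rel_of_rel_mul_right {x y z} hz := by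
    rintro ⟨e, he, he', h⟩
    have hz' : algebraMap R (FractionRing R) z ≠ 0 :=
      (map_ne_zero_iff _ (IsFractionRing.injective R (FractionRing R))).mpr hz
    rw [map_mul, map_mul, mul_right_comm] at h
    exact ⟨e, he, he', mul_right_cancel₀ hz' h⟩
  exists_eq_mul {a x y} ha ha0 hx hy := by
    rintro ⟨e, he, he', h⟩
    obtain ⟨v, w, hv, hw, rfl, hvx, hwy⟩ := hH.t2 a ha ha0 _ (hH.algebraMap_mem hf hx) _
      (H.mul_mem (hH.algebraMap_mem hf hy) he) (by rw [h, map_mul, mul_assoc])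
    exact ⟨v, hv, w, hw, rfl, hvx, (assocCon H).trans hwy ⟨e, he, he', rfl⟩⟩
  isUnit_of_mem_of_rel_one {a} ha ha0 := by
    rintro ⟨e, -, ⟨e', he', hee'⟩, h⟩
    rw [map_one, one_mul] at h
    obtain ⟨b, -, hab⟩ := hH.t1' a ha ha0 ⟨e', he', by rw [h, hee']⟩
    exact IsUnit.of_mul_eq_one b hab

lemma isTransferOrder [Algebra.IsIntegral O R] [Finite (R ⧸ O.conductor)]
    (hH : IsTKOvermonoid O H) (hf : O.conductor ≠ ⊥)
    (htor : ∀ g : ClassGroup R, ∃ n : ℕ, 0 < n ∧ g ^ n = 1)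
    (hcls : ∀ g : ClassGroup R, ∃ (Q : Ideal R) (hQ : Q ∈ (Ideal R)⁰),
      Q.IsPrime ∧ ¬ O.conductor ≤ Q ∧ ClassGroup.mk0 ⟨Q, hQ⟩ = g) :
    IsTransferOrder O (overmonoidCon H) where
  toIsTransferCon := hH.isTransferCon hf
  conductor_ne_bot := hf
  finite_quotient := inferInstance
  mem_of_isIdempotent := mem_of_mul_self_sub_mem_conductor fun Q Q' hQ hQ' hQf hQ'f hQQ' hQe =>
    (hH.isTransferCon hf).eq_of_comap_eq htor hf hQ hQ' hQf hQ'f hQQ' ▸ hQe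
  exists_regularPrime g := by
    obtain ⟨Q, hQ0, hQ, hQf, rfl⟩ := hcls g
    have hQ' : Prime Q := Ideal.prime_of_isPrime (nonZeroDivisors.ne_zero hQ0) hQ
    exact ⟨Q, ⟨hQ', (isCoprime_iff_not_le_of_prime hQ').mpr hQf⟩, idealClass_eq_mk0 hQ0⟩

end IsTKOvermonoid

namespace IsTransferOrder

variable [IsDedekindDomain R] {O : Subring R} {c : Con R} {P : Ideal R}
  [hq : (P.comap O.subtype).IsPrime]

lemma exists_isLocalAtom_idealVal_eq_one (hc : IsTransferOrder O c)
    (hgen : HasRegularGenerators O) (hP : Prime P) (hPf : O.conductor ≤ P) :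
    ∃ a : O, IsLocalAtom O P hq a ∧ idealVal P (a : R) = 1 := by
  classical
  obtain ⟨w, hwO, hw0, hw⟩ := hc.exists_mem_conductorFactors_eq_singleton hgen hP hPf
  have hw1 : idealVal P w = 1 := by
    rw [idealVal_eq_count_conductorFactors hPf, hw, Multiset.count_singleton_self]
  exact ⟨⟨w, hwO⟩, isLocalAtom_of_idealVal_eq_one hP hw0 hw1, hw1⟩

end IsTransferOrder

lemma IsLocalAtom.idealVal_ne_zero [IsDedekindDomain R] {O : Subring R} {P : Ideal R}
    [hq : (P.comap O.subtype).IsPrime] (hP : Prime P) {a : O} (ha : IsLocalAtom O P hq a) :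
    idealVal P (a : R) ≠ 0 := by
  rw [Ne, idealVal_eq_zero_iff hP ha.ne_zero, ← isUnit_algebraMap_iff_notMem]
  exact Irreducible.not_isUnit ha

end Overmonoid

theorem valuations_of_local_atoms
    {R : Type*} [CommRing R] [IsDomain R] [IsDedekindDomain R]
    (O : Subring R) (hne : O ≠ ⊤) (hfg : Module.Finite ↥O R)
    (hfrac : ∀ r : R, ∃ a b : ↥O, (b : R) ≠ 0 ∧ (b : R) * r = (a : R))
    (htor : ∀ c : ClassGroup R, ∃ n : ℕ, 0 < n ∧ c ^ n = 1)
    (hfin : Finite (R ⧸ O.conductor))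
    (hcls : ∀ c : ClassGroup R, ∃ (P : Ideal R) (hP : P ∈ (Ideal R)⁰),
      P.IsPrime ∧ ¬ O.conductor ≤ P ∧ ClassGroup.mk0 ⟨P, hP⟩ = c)
    (H : Submonoid (FractionRing R)) (hH : IsTKOvermonoid O H)
    (hpic : Nonempty (ClassGroup ↥O ≃* ClassGroup R))
    (P : Ideal R) (hP : P ∈ (Ideal R)⁰) (hPp : P.IsPrime)
    (hPf : O.conductor ≤ P)
    (hq : (Ideal.comap (Subring.subtype O) P).IsPrime) :
    (orderOf (ClassGroup.mk0 ⟨P, hP⟩) = 2 →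
      {m : ℕ | ∃ a : ↥O, IsLocalAtom O P hq a ∧ idealVal P (a : R) = m} ⊆ {1, 2}) ∧
    (orderOf (ClassGroup.mk0 ⟨P, hP⟩) ≠ 2 →
      {m : ℕ | ∃ a : ↥O, IsLocalAtom O P hq a ∧ idealVal P (a : R) = m} = {1}) ∧
    (∀ r : R, ∃ ε : Rˣ, (ε : R) * r ∈ O) := by
  have hf : O.conductor ≠ ⊥ := conductor_ne_bot (nonZeroDivisors.ne_zero hP) hPp.ne_top
  have : Algebra.IsIntegral O R := inferInstance
  have hc := hH.isTransferOrder hf htor hcls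
  obtain ⟨ψ⟩ := hpic
  have hgen := hc.hasRegularGenerators ψ
  have hP' : Prime P := Ideal.prime_of_isPrime (nonZeroDivisors.ne_zero hP) hPp
  rw [← idealClass_eq_mk0 hP]
  refine ⟨fun _ => ?_, fun hn => Set.Subset.antisymm ?_ ?_,
    hc.exists_units_mul_mem_subring hgen⟩
  · rintro _ ⟨a, ha, rfl⟩
    have hval := ha.idealVal_ne_zero hP'
    rw [Set.mem_insert_iff, Set.mem_singleton_iff]
    rcases hc.isAdmissibleVal_of_isLocalAtom hgen hP' hPf ha with h1 | ⟨-, -, h2⟩ <;> lia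
  · rintro _ ⟨a, ha, rfl⟩
    rcases hc.isAdmissibleVal_of_isLocalAtom hgen hP' hPf ha with h1 | ⟨hcl, hsq, -⟩
    · exact h1
    · exact absurd (orderOf_eq_prime hsq hcl) hn
  · rintro _ rfl
    exact hc.exists_isLocalAtom_idealVal_eq_one hgen hP' hPf
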